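/- arXiv:1305.2154 — 7 statements merged into one kernel-verified Lean document; each statement's English description precedes it below -/
import Mathlib

section
/- Every connected finite simple graph G with maximum degree at most 6 admits a lattice drawing in ℤ³. Moreover, if G is bipartite, the lattice drawing can be chosen so that for every edge the two endpoint cubes of its wire have opposite parity (equivalently, every wire has even length). -/
/-- Two cubes of `ℤ^d` are adjacent if they differ by a standard basis vector. -/
def CubeAdj {d : ℕ} (a b : Fin d → ℤ) : Prop :=
  ∃ i : Fin d, a = b + Pi.single i 1 ∨ b = a + Pi.single i 1

/-- A wire: a finite sequence of distinct cubes in which two cubes are adjacent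
iff they are consecutive. -/
def IsWire (w : List (Fin 3 → ℤ)) : Prop :=
  w.Nodup ∧ ∀ i j : Fin w.length,
    CubeAdj (w.get i) (w.get j) ↔ ((i : ℕ) + 1 = (j : ℕ) ∨ (j : ℕ) + 1 = (i : ℕ))

/-- `c` and `c'` are consecutive cubes of the list `w` (in either order). -/
def ConsecIn (w : List (Fin 3 → ℤ)) (c c' : Fin 3 → ℤ) : Prop :=
  ∃ i : ℕ, (w[i]? = some c ∧ w[i + 1]? = some c') ∨
           (w[i]? = some c' ∧ w[i + 1]? = some c)

/-- A lattice drawing of a simple graph `G` in `ℤ³`: an injective placement of the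
vertices together with, for each edge `uv`, a wire with endpoints `f u`, `f v`, such
that two cubes of the union of the wires are adjacent iff they are consecutive cubes
of exactly one of the wires. -/
structure LatticeDrawing {V : Type*} (G : SimpleGraph V) where
  f : V → (Fin 3 → ℤ)
  f_inj : Function.Injective f
  wire : G.edgeSet → List (Fin 3 → ℤ)
  wire_isWire : ∀ e, IsWire (wire e)
  wire_endpoints : ∀ e : G.edgeSet, ∃ u v : V, e.val = s(u, v) ∧
    (wire e).head? = some (f u) ∧ (wire e).getLast? = some (f v)
  proper : ∀ c c' : Fin 3 → ℤ, (∃ e, c ∈ wire e) → (∃ e, c' ∈ wire e) →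
    (CubeAdj c c' ↔ ∃! e : G.edgeSet, ConsecIn (wire e) c c')

theorem LDX.list_of_reach {A : SimpleGraph (Fin 3 → ℤ)} {a b : Fin 3 → ℤ} (h : A.Reachable a b) :
    ∃ w : List (Fin 3 → ℤ), w.Nodup ∧ (∀ i (h : i + 1 < w.length), A.Adj w[i] w[i+1]) ∧
      w.head? = some a ∧ w.getLast? = some b := by
  classical
  obtain ⟨p⟩ := h
  refine ⟨p.toPath.1.support, p.toPath.2.support_nodup, ?_, ?_, ?_⟩
  · exact List.isChain_iff_getElem.1 (SimpleGraph.Walk.isChain_adj_support _)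
  · rw [List.head?_eq_some_head (by simp)]; simp
  · rw [List.getLast?_eq_some_getLast (by simp)]; simp

theorem LDX.adj_symm {a b : Fin 3 → ℤ} (h : CubeAdj a b) : CubeAdj b a := by
  obtain ⟨i, h | h⟩ := h
  exacts [⟨i, Or.inr h⟩, ⟨i, Or.inl h⟩]

theorem LDX.consec_symm {w} {a b : Fin 3 → ℤ} (h : ConsecIn w a b) : ConsecIn w b a := by
  obtain ⟨i, h | h⟩ := h
  exacts [⟨i, Or.inr h⟩, ⟨i, Or.inl h⟩]

theorem LDX.consec_adj {w} {a b : Fin 3 → ℤ} {A : SimpleGraph (Fin 3 → ℤ)}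
    (hw : ∀ i (h : i + 1 < w.length), A.Adj w[i] w[i+1]) (h : ConsecIn w a b) : A.Adj a b := by
  obtain ⟨i, ⟨h1, h2⟩ | ⟨h1, h2⟩⟩ := h <;>
  · obtain ⟨h1', h1⟩ := List.getElem?_eq_some_iff.1 h1
    obtain ⟨h2', h2⟩ := List.getElem?_eq_some_iff.1 h2
    have := hw i h2'
    rw [h1, h2] at this
    first | exact this | exact this.symm

/-- A cube which is not an endpoint and has at most two neighbours in `S`. -/
def LDX.Mid {V : Type} (f : V → Fin 3 → ℤ) (S : Set (Fin 3 → ℤ)) (m : Fin 3 → ℤ) : Prop :=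
  (∀ v, f v ≠ m) ∧ ∃ a b, ∀ x ∈ S, CubeAdj m x → x = a ∨ x = b

theorem LDX.key {V : Type} {f : V → Fin 3 → ℤ} {S : Set (Fin 3 → ℤ)} {m x : Fin 3 → ℤ}
    {A : SimpleGraph (Fin 3 → ℤ)} (hA : ∀ c c', A.Adj c c' → CubeAdj c c' ∧ c ∈ S)
    {w : List (Fin 3 → ℤ)} (hnd : w.Nodup)
    (hw : ∀ i (h : i + 1 < w.length), A.Adj w[i] w[i+1]) {u v : V}
    (h1 : w.head? = some (f u)) (h2 : w.getLast? = some (f v))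
    (hm : LDX.Mid f S m) (hmw : m ∈ w) (hx : x ∈ S) (hmx : CubeAdj m x) : ConsecIn w m x := by
  obtain ⟨hf, a, b, hab⟩ := hm
  obtain ⟨i, hi, rfl⟩ := List.getElem_of_mem hmw
  have hi0 : i ≠ 0 := by
    rintro rfl
    rw [List.head?_eq_getElem?, List.getElem?_eq_getElem hi] at h1
    exact hf u (Option.some.inj h1).symm
  have hil : i + 1 < w.length := by
    by_contra hcon
    have : w.length - 1 = i := by omega
    rw [List.getLast?_eq_getElem?, this, List.getElem?_eq_getElem hi] at h2
    exact hf v (Option.some.inj h2).symm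
  obtain ⟨j, rfl⟩ := Nat.exists_eq_succ_of_ne_zero hi0
  have e1 := hw j hi
  have e2 := hw (j+1) hil
  have p1 := hab _ (hA _ _ e1).2 (hA _ _ e1.symm).1
  have p2 := hab _ (hA _ _ e2.symm).2 (hA _ _ e2).1
  have hne : w[j] ≠ w[j+1+1] := by
    intro h
    have := (List.Nodup.getElem_inj_iff hnd).1 h
    omega
  have : x = w[j] ∨ x = w[j+1+1] := by
    rcases hab x hx hmx with h | h <;> rcases p1 with h' | h' <;> rcases p2 with h'' | h'' <;>
      simp_all
  rcases this with h | h
  · exact ⟨j, Or.inr ⟨by rw [h, List.getElem?_eq_getElem], by simp⟩⟩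
  · exact ⟨j+1, Or.inl ⟨by simp, by rw [h, List.getElem?_eq_getElem]⟩⟩

theorem LDX.build {V : Type} (G : SimpleGraph V) (f : V → Fin 3 → ℤ) (hf : Function.Injective f)
    (S : Set (Fin 3 → ℤ)) (hfS : ∀ v, f v ∈ S) (A : G.edgeSet → SimpleGraph (Fin 3 → ℤ))
    (hA : ∀ e c c', (A e).Adj c c' → CubeAdj c c' ∧ c ∈ S)
    (hdisj : ∀ e e' c c', (A e).Adj c c' → (A e').Adj c c' → e = e')
    (hS : ∀ c ∈ S, ∀ c' ∈ S, CubeAdj c c' → LDX.Mid f S c ∨ LDX.Mid f S c')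
    (hreach : ∀ (e : G.edgeSet) u v, e.val = s(u, v) → (A e).Reachable (f u) (f v)) :
    ∃ D : LatticeDrawing G, D.f = f := by
  have hex : ∀ e : G.edgeSet, ∃ (w : List (Fin 3 → ℤ)) (u v : V), e.val = s(u, v) ∧ w.Nodup ∧
      (∀ i (h : i + 1 < w.length), (A e).Adj w[i] w[i+1]) ∧
      w.head? = some (f u) ∧ w.getLast? = some (f v) := by
    intro e
    obtain ⟨u, v, huv⟩ : ∃ u v, e.val = s(u, v) := by
      induction h : e.val using Sym2.ind with
      | _ u v => exact ⟨u, v, rfl⟩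
    obtain ⟨w, hw⟩ := LDX.list_of_reach (hreach e u v huv)
    exact ⟨w, u, v, huv, hw⟩
  choose w U W hUW hnd hch hhead hlast using hex
  have hwS : ∀ e, ∀ c ∈ w e, c ∈ S := by
    intro e c hc
    obtain ⟨i, hi, rfl⟩ := List.getElem_of_mem hc
    rcases i with _ | i
    · have h1 := hhead e
      rw [List.head?_eq_getElem?, List.getElem?_eq_getElem hi] at h1
      rw [Option.some.inj h1]
      exact hfS _
    · exact (hA e _ _ (hch e i hi).symm).2
  refine ⟨⟨f, hf, w, ?_, fun e => ⟨U e, W e, hUW e, hhead e, hlast e⟩, ?_⟩, rfl⟩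
  · intro e
    refine ⟨hnd e, fun i j => ⟨fun h => ?_, fun h => ?_⟩⟩
    · have hi := List.get_mem (w e) i
      have hj := List.get_mem (w e) j
      have hc : ConsecIn (w e) ((w e).get i) ((w e).get j) := by
        rcases hS _ (hwS e _ hi) _ (hwS e _ hj) h with hm | hm
        · exact LDX.key (hA e) (hnd e) (hch e) (hhead e) (hlast e) hm hi (hwS e _ hj) h
        · exact LDX.consec_symm (LDX.key (hA e) (hnd e) (hch e) (hhead e) (hlast e) hm hj
            (hwS e _ hi) (LDX.adj_symm h))
      obtain ⟨k, ⟨h1, h2⟩ | ⟨h1, h2⟩⟩ := hc <;>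
      · obtain ⟨h1', h1⟩ := List.getElem?_eq_some_iff.1 h1
        obtain ⟨h2', h2⟩ := List.getElem?_eq_some_iff.1 h2
        rw [List.get_eq_getElem] at h1 h2
        have := (List.Nodup.getElem_inj_iff (hnd e)).1 h1
        have := (List.Nodup.getElem_inj_iff (hnd e)).1 h2
        omega
    · obtain ⟨i, hi⟩ := i
      obtain ⟨j, hj⟩ := j
      rcases h with h | h
      · simp only at h
        subst h
        exact (hA e _ _ (hch e i hj)).1
      · simp only at h
        subst h
        exact LDX.adj_symm (hA e _ _ (hch e j hi)).1
  · rintro c c' ⟨e1, h1⟩ ⟨e2, h2⟩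
    constructor
    · intro h
      have : ∃ e, ConsecIn (w e) c c' := by
        rcases hS _ (hwS _ _ h1) _ (hwS _ _ h2) h with hm | hm
        · exact ⟨e1, LDX.key (hA _) (hnd _) (hch _) (hhead _) (hlast _) hm h1 (hwS _ _ h2) h⟩
        · exact ⟨e2, LDX.consec_symm (LDX.key (hA _) (hnd _) (hch _) (hhead _) (hlast _) hm h2
            (hwS _ _ h1) (LDX.adj_symm h))⟩
      obtain ⟨e, he⟩ := this
      exact ⟨e, he, fun e' he' =>
        hdisj _ _ _ _ (LDX.consec_adj (hch e') he') (LDX.consec_adj (hch e) he)⟩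
    · rintro ⟨e, he, -⟩
      exact (hA e _ _ (LDX.consec_adj (hch e) he)).1

theorem LDX.parity_adj {a b : Fin 3 → ℤ} (h : CubeAdj a b) :
    Odd (a 0 + a 1 + a 2 + (b 0 + b 1 + b 2)) := by
  obtain ⟨i, h | h⟩ := h <;> subst h <;> fin_cases i <;> simp [Int.odd_iff] <;> omega

theorem LDX.parity_wire {w : List (Fin 3 → ℤ)} (hw : IsWire w) (i : ℕ) (hi : i < w.length)
    (a : Fin 3 → ℤ) (ha : w.head? = some a) :
    Even (a 0 + a 1 + a 2 + (w[i] 0 + w[i] 1 + w[i] 2) + i) := by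
  induction i with
  | zero =>
    rw [List.head?_eq_getElem?, List.getElem?_eq_getElem hi] at ha
    rw [Option.some.inj ha]
    simp
  | succ i ih =>
    have h1 := ih (by omega)
    have h2 := LDX.parity_adj ((hw.2 ⟨i, by omega⟩ ⟨i+1, hi⟩).2 (Or.inl rfl))
    simp only [List.get_eq_getElem] at h2
    rw [Int.even_iff] at h1 ⊢
    rw [Int.odd_iff] at h2
    push_cast
    omega

/-- The graph whose edges are joining `c` and `c + e_i` for `O c i`. -/
def LDX.gr (O : (Fin 3 → ℤ) → Fin 3 → Prop) : SimpleGraph (Fin 3 → ℤ) where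
  Adj c c' := ∃ i, (c' = c + Pi.single i 1 ∧ O c i) ∨ (c = c' + Pi.single i 1 ∧ O c' i)
  symm := ⟨by
    rintro c c' ⟨i, h | h⟩
    exacts [⟨i, Or.inr h⟩, ⟨i, Or.inl h⟩]⟩
  loopless := ⟨by
    rintro c ⟨i, ⟨h, -⟩ | ⟨h, -⟩⟩ <;>
    · have := congrFun h i
      simp at this⟩

theorem LDX.gr_step {O : (Fin 3 → ℤ) → Fin 3 → Prop} {c c'} (i : Fin 3)
    (h : c' = c + Pi.single i 1) (hO : O c i) : (LDX.gr O).Reachable c c' :=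
  SimpleGraph.Adj.reachable ⟨i, Or.inl ⟨h, hO⟩⟩

theorem LDX.gr_disj {O O' : (Fin 3 → ℤ) → Fin 3 → Prop} {c c'} (h : (LDX.gr O).Adj c c')
    (h' : (LDX.gr O').Adj c c') : ∃ d i, O d i ∧ O' d i := by
  obtain ⟨i, ⟨h, ho⟩ | ⟨h, ho⟩⟩ := h <;> obtain ⟨j, ⟨h', ho'⟩ | ⟨h', ho'⟩⟩ := h' <;>
  · have e0 := congrFun h 0
    have e1 := congrFun h 1
    have e2 := congrFun h 2
    have e0' := congrFun h' 0
    have e1' := congrFun h' 1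
    have e2' := congrFun h' 2
    have : i = j := by
      fin_cases i <;> fin_cases j <;> simp at e0 e1 e2 e0' e1' e2' ⊢ <;> omega
    subst this
    first
      | exact ⟨_, i, ho, ho'⟩
      | (exfalso
         fin_cases i <;> simp at e0 e1 e2 e0' e1' e2' <;> omega)

theorem LDX.line_x {O : (Fin 3 → ℤ) → Fin 3 → Prop} {a b y z : ℤ} (hab : a ≤ b)
    (h : ∀ t, a ≤ t → t < b → O ![t, y, z] 0) : (LDX.gr O).Reachable ![a, y, z] ![b, y, z] := by
  induction b, hab using Int.leInduction with
  | base => rfl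
  | succ n hn ih =>
    refine (ih fun t h1 h2 => h t h1 (by omega)).trans (LDX.gr_step 0 ?_ (h n hn (by omega)))
    ext i; fin_cases i <;> simp

theorem LDX.line_y {O : (Fin 3 → ℤ) → Fin 3 → Prop} {a b x z : ℤ} (hab : a ≤ b)
    (h : ∀ t, a ≤ t → t < b → O ![x, t, z] 1) : (LDX.gr O).Reachable ![x, a, z] ![x, b, z] := by
  induction b, hab using Int.leInduction with
  | base => rfl
  | succ n hn ih =>
    refine (ih fun t h1 h2 => h t h1 (by omega)).trans (LDX.gr_step 1 ?_ (h n hn (by omega)))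
    ext i; fin_cases i <;> simp

theorem LDX.line_z {O : (Fin 3 → ℤ) → Fin 3 → Prop} {a b x y : ℤ} (hab : a ≤ b)
    (h : ∀ t, a ≤ t → t < b → O ![x, y, t] 2) : (LDX.gr O).Reachable ![x, y, a] ![x, y, b] := by
  induction b, hab using Int.leInduction with
  | base => rfl
  | succ n hn ih =>
    refine (ih fun t h1 h2 => h t h1 (by omega)).trans (LDX.gr_step 2 ?_ (h n hn (by omega)))
    ext i; fin_cases i <;> simp

/-- The part of the wires leaving a vertex at `(a,0,0)` through port `p`. -/
def LDX.stub (a : ℤ) (p : ℕ) (x y z : ℤ) (i : ℕ) : Prop :=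
  (p = 0 ∧ i = 2 ∧ x = a ∧ y = 0 ∧ 0 ≤ z) ∨
  (p = 1 ∧ i = 0 ∧ y = 0 ∧ z = 0 ∧ a ≤ x ∧ x < a + 2) ∨
  (p = 1 ∧ i = 2 ∧ x = a + 2 ∧ y = 0 ∧ 0 ≤ z) ∨
  (p = 2 ∧ i = 0 ∧ y = 0 ∧ z = 0 ∧ a - 2 ≤ x ∧ x < a) ∨
  (p = 2 ∧ i = 2 ∧ x = a - 2 ∧ y = 0 ∧ 0 ≤ z) ∨
  (p = 3 ∧ i = 1 ∧ x = a ∧ z = 0 ∧ 0 ≤ y ∧ y < 2) ∨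
  (p = 3 ∧ i = 2 ∧ x = a ∧ y = 2 ∧ 0 ≤ z) ∨
  (p = 4 ∧ i = 1 ∧ x = a ∧ z = 0 ∧ -2 ≤ y ∧ y < 0) ∨
  (p = 4 ∧ i = 2 ∧ x = a ∧ y = -2 ∧ 0 ≤ z) ∨
  (p = 5 ∧ i = 2 ∧ x = a ∧ y = 0 ∧ -2 ≤ z ∧ z < 0) ∨
  (p = 5 ∧ i = 0 ∧ y = 0 ∧ z = -2 ∧ a ≤ x ∧ x < a + 4) ∨
  (p = 5 ∧ i = 2 ∧ x = a + 4 ∧ y = 0 ∧ -2 ≤ z)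

theorem LDX.stub_disj {a b : ℤ} {p q : ℕ} {x y z : ℤ} {i : ℕ} (h : LDX.stub a p x y z i)
    (h' : LDX.stub b q x y z i) (hab : a = b ∨ a + 8 ≤ b ∨ b + 8 ≤ a) : a = b ∧ p = q := by
  unfold LDX.stub at h h'
  rcases h with h | h | h | h | h | h | h | h | h | h | h | h <;>
  rcases h' with h' | h' | h' | h' | h' | h' | h' | h' | h' | h' | h' | h' <;> omega

theorem LDX.stub_reach {O : (Fin 3 → ℤ) → Fin 3 → Prop} {a : ℤ} {p : ℕ} (hp : p < 6)
    (hO : ∀ x y z (i : Fin 3), LDX.stub a p x y z i → O ![x, y, z] i) {h : ℤ} (hh : 0 ≤ h) :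
    ∃ X Y, (X = a - 2 ∨ X = a ∨ X = a + 2 ∨ X = a + 4) ∧ Y % 2 = 0 ∧
      (LDX.gr O).Reachable ![a, 0, 0] ![X, Y, h] := by
  interval_cases p
  · refine ⟨a, 0, by omega, by omega, LDX.line_z hh fun t h1 h2 => hO _ _ _ _ ?_⟩
    simp [LDX.stub]; omega
  · refine ⟨a + 2, 0, by omega, by omega, (LDX.line_x (b := a + 2) (by omega)
      fun t h1 h2 => hO _ _ _ _ ?_).trans (LDX.line_z hh fun t h1 h2 => hO _ _ _ _ ?_)⟩ <;>
    · simp [LDX.stub]; omega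
  · refine ⟨a - 2, 0, by omega, by omega, (LDX.line_x (a := a - 2) (by omega)
      fun t h1 h2 => hO _ _ _ _ ?_).symm.trans (LDX.line_z hh fun t h1 h2 => hO _ _ _ _ ?_)⟩ <;>
    · simp [LDX.stub]; omega
  · refine ⟨a, 2, by omega, by omega, (LDX.line_y (b := 2) (by omega)
      fun t h1 h2 => hO _ _ _ _ ?_).trans (LDX.line_z hh fun t h1 h2 => hO _ _ _ _ ?_)⟩ <;>
    · simp [LDX.stub]; omega
  · refine ⟨a, -2, by omega, by omega, (LDX.line_y (a := -2) (by omega)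
      fun t h1 h2 => hO _ _ _ _ ?_).symm.trans (LDX.line_z hh fun t h1 h2 => hO _ _ _ _ ?_)⟩ <;>
    · simp [LDX.stub]; omega
  · refine ⟨a + 4, 0, by omega, by omega, ((LDX.line_z (a := -2) (by omega)
      fun t h1 h2 => hO _ _ _ _ ?_).symm.trans (LDX.line_x (b := a + 4) (by omega)
      fun t h1 h2 => hO _ _ _ _ ?_)).trans
      (LDX.line_z (by omega) fun t h1 h2 => hO _ _ _ _ ?_)⟩ <;>
    · simp [LDX.stub]; omega

/-- Grid points: all coordinates but one lie in the sets `P j`. -/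
def LDX.grid (P : Fin 3 → ℤ → Prop) : Set (Fin 3 → ℤ) := {c | ∃ i, ∀ j, j ≠ i → P j (c j)}

theorem LDX.grid_mid' {V : Type} {f : V → Fin 3 → ℤ} {P : Fin 3 → ℤ → Prop}
    (hP : ∀ i t, P i t → ¬ P i (t + 1)) (hf : ∀ v i, P i (f v i)) {m : Fin 3 → ℤ} {i : Fin 3}
    (hm : m ∈ LDX.grid P) (hi : ¬ P i (m i)) : LDX.Mid f (LDX.grid P) m := by
  obtain ⟨k, hk⟩ := hm
  have hki : k = i := by
    by_contra h
    exact hi (hk i (Ne.symm h))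
  subst hki
  refine ⟨fun v hv => hi (hv ▸ hf v k), m + Pi.single k 1, m - Pi.single k 1, ?_⟩
  rintro x ⟨l, hl⟩ ⟨j, hj⟩
  by_cases hjk : j = k
  · subst hjk
    rcases hj with hj | hj
    · right; rw [hj]; simp
    · left; exact hj
  · exfalso
    have hxk : x k = m k := by
      rcases hj with hj | hj <;> rw [hj] <;> simp [Ne.symm hjk]
    have hxj : ¬ P j (x j) := by
      have := hk j hjk
      rcases hj with hj | hj
      · rw [hj] at this
        intro h'
        exact hP _ _ h' (by simpa using this)
      · rw [hj]
        simpa using hP _ _ this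
    have h1 : j = l := by
      by_contra h; exact hxj (hl j h)
    have h2 : k = l := by
      by_contra h; exact hi (hxk ▸ hl k h)
    exact hjk (h1.trans h2.symm)

theorem LDX.grid_mid {V : Type} {f : V → Fin 3 → ℤ} {P : Fin 3 → ℤ → Prop}
    (hP : ∀ i t, P i t → ¬ P i (t + 1)) (hf : ∀ v i, P i (f v i)) :
    ∀ c ∈ LDX.grid P, ∀ c' ∈ LDX.grid P, CubeAdj c c' →
      LDX.Mid f (LDX.grid P) c ∨ LDX.Mid f (LDX.grid P) c' := by
  rintro c hc c' hc' ⟨i, h⟩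
  by_cases h1 : P i (c i)
  · right
    refine LDX.grid_mid' hP hf (i := i) hc' ?_
    rcases h with h | h
    · rw [h] at h1
      intro h'
      exact hP _ _ h' (by simpa using h1)
    · rw [h]
      simpa using hP _ _ h1
  · exact Or.inl (LDX.grid_mid' hP hf hc h1)

theorem LDX.exists_port {V : Type} [Fintype V] (G : SimpleGraph V)
    (hdeg : ∀ v : V, (G.neighborSet v).ncard ≤ 6) : ∃ port : V → V → ℕ,
      (∀ u v, port u v < 6) ∧ ∀ u v w, G.Adj u v → G.Adj u w → port u v = port u w → v = w := by
  have : ∀ u, ∃ g : V → ℕ, (∀ v, g v < 6) ∧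
      ∀ v w, G.Adj u v → G.Adj u w → g v = g w → v = w := by
    classical
    intro u
    have hc : Fintype.card (G.neighborSet u) ≤ Fintype.card (Fin 6) := by
      have := hdeg u
      rw [← Nat.card_coe_set_eq, Nat.card_eq_fintype_card] at this
      simpa only [Fintype.card_fin] using this
    obtain ⟨g⟩ := Function.Embedding.nonempty_of_card_le hc
    refine ⟨fun v => if h : G.Adj u v then (g ⟨v, h⟩ : ℕ) else 0, fun v => ?_, ?_⟩
    · dsimp only
      split_ifs
      · exact Fin.is_lt _
      · omega
    · intro v w hv hw h
      simp only [hv, hw, dif_pos] at h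
      have := g.injective (Fin.ext h)
      exact congrArg Subtype.val this
  choose port h1 h2 using this
  exact ⟨port, h1, h2⟩

theorem LDX.main {V : Type} [Fintype V] (G : SimpleGraph V)
    (hdeg : ∀ v : V, (G.neighborSet v).ncard ≤ 6) (col : V → ℤ) (hcol : ∀ v, col v = 0 ∨ col v = 1) :
    ∃ D : LatticeDrawing G, ∀ v, (D.f v 0 + D.f v 1 + D.f v 2) % 2 = col v := by
  classical
  obtain ⟨port, hport6, hport⟩ := LDX.exists_port G hdeg
  let xc : V → ℤ := fun v => 10 * ((Fintype.equivFin V v : ℕ) : ℤ) + col v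
  have hsep : ∀ u v, u = v ∨ xc u + 8 ≤ xc v ∨ xc v + 8 ≤ xc u := by
    intro u v
    by_cases h : u = v
    · exact Or.inl h
    · have : (Fintype.equivFin V u : ℕ) ≠ Fintype.equivFin V v := fun h' =>
        h ((Fintype.equivFin V).injective (Fin.ext h'))
      have := hcol u
      have := hcol v
      simp only [xc]
      omega
  have hxcinj : ∀ u v, xc u = xc v → u = v := by
    intro u v h
    rcases hsep u v with h' | h' | h' <;> [exact h'; omega; omega]
  let ht : G.edgeSet → ℤ := fun e => 2 + 2 * ((Fintype.equivFin G.edgeSet e : ℕ) : ℤ)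
  have hht : ∀ e, 2 ≤ ht e ∧ ht e % 2 = 0 := by
    intro e; simp only [ht]; omega
  have hhtinj : ∀ e e', ht e = ht e' → e = e' := by
    intro e e' h
    apply (Fintype.equivFin G.edgeSet).injective
    apply Fin.ext
    simp only [ht] at h
    omega
  let Dx : ℤ → Prop := fun x => ∃ v, x = xc v - 2 ∨ x = xc v ∨ x = xc v + 2 ∨ x = xc v + 4
  let P : Fin 3 → ℤ → Prop := ![Dx, fun y => y % 2 = 0, fun z => z % 2 = 0]
  have hP : ∀ i t, P i t → ¬ P i (t + 1) := by
    intro i t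
    fin_cases i
    · rintro ⟨u, hu⟩ ⟨v, hv⟩
      rcases hsep u v with h | h | h
      · subst h; omega
      · omega
      · omega
    · intro (h : t % 2 = 0) (h' : (t + 1) % 2 = 0)
      omega
    · intro (h : t % 2 = 0) (h' : (t + 1) % 2 = 0)
      omega
  let O : G.edgeSet → (Fin 3 → ℤ) → Fin 3 → Prop := fun e c i =>
    (∃ u w, e.val = s(u, w) ∧ LDX.stub (xc u) (port u w) (c 0) (c 1) (c 2) i) ∨
    (c 2 = ht e ∧ ((i = 0 ∧ c 1 % 2 = 0) ∨ (i = 1 ∧ Dx (c 0))))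
  have hO : ∀ e c i, O e c i → ∀ j, j ≠ i → P j (c j) := by
    rintro e c i (⟨u, w, -, h⟩ | ⟨h1, h2⟩) j hj
    · unfold LDX.stub at h
      fin_cases j <;> fin_cases i <;> simp at hj h
      · show Dx (c 0)
        exact ⟨u, by omega⟩
      · show Dx (c 0)
        exact ⟨u, by omega⟩
      · show c 1 % 2 = 0
        omega
      · show c 1 % 2 = 0
        omega
      · show c 2 % 2 = 0
        omega
      · show c 2 % 2 = 0
        omega
    · rcases h2 with ⟨rfl, h2⟩ | ⟨rfl, h2⟩
      · fin_cases j
        · simp at hj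
        · exact h2
        · show c 2 % 2 = 0
          rw [h1]; exact (hht e).2
      · fin_cases j
        · exact h2
        · simp at hj
        · show c 2 % 2 = 0
          rw [h1]; exact (hht e).2
  let f : V → Fin 3 → ℤ := fun v => ![xc v, 0, 0]
  have hf : ∀ v i, P i (f v i) := by
    intro v i
    fin_cases i
    · exact ⟨v, by simp [f]⟩
    · show (0 : ℤ) % 2 = 0
      rfl
    · show (0 : ℤ) % 2 = 0
      rfl
  have hb : ∃ D : LatticeDrawing G, D.f = f := by
    refine LDX.build G f (fun u v h => hxcinj u v (congrFun h 0)) (LDX.grid P)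
      (fun v => ⟨0, fun j _ => hf v j⟩) (fun e => LDX.gr (O e)) ?_ ?_ (LDX.grid_mid hP hf) ?_
    · rintro e c c' ⟨i, ⟨h, ho⟩ | ⟨h, ho⟩⟩
      · exact ⟨⟨i, Or.inr h⟩, i, hO _ _ _ ho⟩
      · refine ⟨⟨i, Or.inl h⟩, i, fun j hj => ?_⟩
        have := hO _ _ _ ho j hj
        rw [h]
        simpa [hj] using this
    · intro e e' c c' h h'
      obtain ⟨d, i, h1, h2⟩ := LDX.gr_disj h h'
      rcases h1 with ⟨u, w, he, h1⟩ | ⟨h1, h1'⟩ <;> rcases h2 with ⟨u', w', he', h2⟩ | ⟨h2, h2'⟩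
      · have hab : xc u = xc u' ∨ xc u + 8 ≤ xc u' ∨ xc u' + 8 ≤ xc u :=
          (hsep u u').imp_left (congrArg xc)
        obtain ⟨h3, h4⟩ := LDX.stub_disj h1 h2 hab
        obtain rfl := hxcinj _ _ h3
        have a1 : G.Adj u w := by
          have := e.2
          rwa [he] at this
        have a2 : G.Adj u w' := by
          have := e'.2
          rwa [he'] at this
        obtain rfl := hport _ _ _ a1 a2 h4
        exact Subtype.ext (he.trans he'.symm)
      · exfalso
        have := hht e'
        unfold LDX.stub at h1
        rcases h2' with ⟨rfl, -⟩ | ⟨rfl, -⟩ <;> simp at h1 <;> omega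
      · exfalso
        have := hht e
        unfold LDX.stub at h2
        rcases h1' with ⟨rfl, -⟩ | ⟨rfl, -⟩ <;> simp at h2 <;> omega
      · exact hhtinj _ _ (h1.symm.trans h2)
    · intro e u v he
      have hh : 0 ≤ ht e := by have := hht e; omega
      obtain ⟨X, Y, hX, hY, hr⟩ := LDX.stub_reach (O := O e) (hport6 u v)
        (fun x y z i hs => Or.inl ⟨u, v, he, by simpa using hs⟩) hh
      obtain ⟨X', Y', hX', hY', hr'⟩ := LDX.stub_reach (O := O e) (hport6 v u)
        (fun x y z i hs => Or.inl ⟨v, u, he.trans Sym2.eq_swap, by simpa using hs⟩) hh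
      have k1 : (LDX.gr (O e)).Reachable ![X, Y, ht e] ![X', Y, ht e] := by
        rcases le_total X X' with h | h
        · exact LDX.line_x h fun t _ _ => Or.inr ⟨by simp, Or.inl ⟨rfl, by simpa using hY⟩⟩
        · exact (LDX.line_x h fun t _ _ => Or.inr ⟨by simp, Or.inl ⟨rfl, by simpa using hY⟩⟩).symm
      have k2 : (LDX.gr (O e)).Reachable ![X', Y, ht e] ![X', Y', ht e] := by
        have hd : Dx X' := ⟨v, hX'⟩
        rcases le_total Y Y' with h | h
        · exact LDX.line_y h fun t _ _ => Or.inr ⟨by simp, Or.inr ⟨rfl, by simpa using hd⟩⟩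
        · exact (LDX.line_y h fun t _ _ => Or.inr ⟨by simp, Or.inr ⟨rfl, by simpa using hd⟩⟩).symm
      exact ((hr.trans k1).trans k2).trans hr'.symm
  obtain ⟨D, hD⟩ := hb
  refine ⟨D, fun v => ?_⟩
  rw [hD]
  have := hcol v
  simp only [f, xc]
  simp
  omega

/-- Every connected finite simple graph with maximum degree at most `6` has a lattice
drawing in `ℤ³`; moreover, if the graph is bipartite, the drawing can be chosen so
that the two endpoint cubes of every wire have opposite parity, equivalently every
wire has even length. -/
theorem lattice_drawing_exists {V : Type} [Fintype V] (G : SimpleGraph V)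
    (hconn : G.Connected) (hdeg : ∀ v : V, (G.neighborSet v).ncard ≤ 6) :
    Nonempty (LatticeDrawing G) ∧
    (G.Colorable 2 → ∃ D : LatticeDrawing G,
      (∀ e : G.edgeSet, Even (D.wire e).length) ∧
      ∀ e : G.edgeSet, ∀ a b : Fin 3 → ℤ,
        (D.wire e).head? = some a → (D.wire e).getLast? = some b →
        Odd (a 0 + a 1 + a 2 + (b 0 + b 1 + b 2))) := by

  constructor
  · obtain ⟨D, -⟩ := LDX.main G hdeg (fun _ => 0) (fun _ => Or.inl rfl)
    exact ⟨D⟩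
  · rintro ⟨C⟩
    obtain ⟨D, hD⟩ := LDX.main G hdeg (fun v => ((C v : ℕ) : ℤ)) (fun v => by
      have := (C v).is_lt
      omega)
    have hodd : ∀ e : G.edgeSet, ∀ a b : Fin 3 → ℤ,
        (D.wire e).head? = some a → (D.wire e).getLast? = some b →
        Odd (a 0 + a 1 + a 2 + (b 0 + b 1 + b 2)) := by
      intro e a b ha hb
      obtain ⟨u, v, he, hu, hv⟩ := D.wire_endpoints e
      obtain rfl := Option.some.inj (hu.symm.trans ha)
      obtain rfl := Option.some.inj (hv.symm.trans hb)
      have hadj : G.Adj u v := by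
        have := e.2
        rwa [he] at this
      have hne : (C u : ℕ) ≠ C v := fun h => C.valid hadj (Fin.ext h)
      have := hD u
      have := hD v
      have := (C u).is_lt
      have := (C v).is_lt
      rw [Int.odd_iff]
      omega
    refine ⟨D, fun e => ?_, hodd⟩
    obtain ⟨u, v, he, hu, hv⟩ := D.wire_endpoints e
    have h1 := hodd e _ _ hu hv
    have hpos : 0 < (D.wire e).length := by
      rw [List.length_pos_iff]
      intro h
      simp [h] at hu
    have h2 := LDX.parity_wire (D.wire_isWire e) ((D.wire e).length - 1) (by omega) _ hu
    rw [List.getLast?_eq_getElem?, List.getElem?_eq_getElem (by omega)] at hv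
    rw [Option.some.inj hv] at h2
    rw [Int.odd_iff] at h1
    rw [Int.even_iff] at h2
    rw [Nat.even_iff]
    omega
end

section
/- Let p₁,…,p_t be a sequence of distinct points of ℤ² in which p_i and p_j are adjacent if and only if |i−j| = 1, and let w = {(p_i,0),(p_i,1) : 1 ≤ i ≤ t} ⊂ ℤ³ be the associated slab-wire. Then every slab contained in w equals q_i ∪ q_{i+1} for some 1 ≤ i < t, i.e., the union of two consecutive cube pairs; in particular w contains no horizontal slab, and any slab inside w covers each of its two cube pairs entirely. -/
/-- Two cells of `ℤ²` are adjacent if they differ by a standard basis vector. -/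
def CellAdj (a b : ℤ × ℤ) : Prop :=
  a = b + (1, 0) ∨ b = a + (1, 0) ∨ a = b + (0, 1) ∨ b = a + (0, 1)

/-- A slab: a lattice copy of the `2 × 2 × 1` brick, i.e. a set of the form
`t + σ({0,1} × {0,1} × {0})` where `σ` permutes the three coordinates. -/
def IsSlab (s : Set (Fin 3 → ℤ)) : Prop :=
  ∃ (t : Fin 3 → ℤ) (σ : Equiv.Perm (Fin 3)),
    s = (fun v : Fin 3 → ℤ => t + v ∘ ⇑σ) ''
      {v | (v 0 = 0 ∨ v 0 = 1) ∧ (v 1 = 0 ∨ v 1 = 1) ∧ v 2 = 0}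

/-- The slab-wire associated to a sequence of points of `ℤ²`. -/
def slabWire {n : ℕ} (p : Fin n → ℤ × ℤ) : Set (Fin 3 → ℤ) :=
  {x | ∃ i : Fin n, x = ![(p i).1, (p i).2, 0] ∨ x = ![(p i).1, (p i).2, 1]}

/-- The `i`-th cube pair of the slab-wire. -/
def cubePair {n : ℕ} (p : Fin n → ℤ × ℤ) (i : Fin n) : Set (Fin 3 → ℤ) :=
  {![(p i).1, (p i).2, 0], ![(p i).1, (p i).2, 1]}

theorem isSlab_cases {s : Set (Fin 3 → ℤ)} (hs : IsSlab s) : ∃ t : Fin 3 → ℤ,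
    (∀ x, x ∈ s ↔ (x 0 = t 0 ∨ x 0 = t 0 + 1) ∧ (x 1 = t 1 ∨ x 1 = t 1 + 1) ∧ x 2 = t 2) ∨
    (∀ x, x ∈ s ↔ (x 0 = t 0 ∨ x 0 = t 0 + 1) ∧ x 1 = t 1 ∧ (x 2 = t 2 ∨ x 2 = t 2 + 1)) ∨
    (∀ x, x ∈ s ↔ x 0 = t 0 ∧ (x 1 = t 1 ∨ x 1 = t 1 + 1) ∧ (x 2 = t 2 ∨ x 2 = t 2 + 1)) := by
  obtain ⟨t, σ, rfl⟩ := hs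
  refine ⟨t, ?_⟩
  have key : ∀ x : Fin 3 → ℤ, x ∈ (fun v : Fin 3 → ℤ => t + v ∘ ⇑σ) ''
      {v | (v 0 = 0 ∨ v 0 = 1) ∧ (v 1 = 0 ∨ v 1 = 1) ∧ v 2 = 0} ↔
      ∀ m, (σ m = 2 ∧ x m = t m) ∨ (σ m ≠ 2 ∧ (x m = t m ∨ x m = t m + 1)) := by
    intro x
    constructor
    · rintro ⟨v, ⟨h0, h1, h2⟩, rfl⟩ m
      simp only [Pi.add_apply, Function.comp_apply]
      generalize σ m = k
      fin_cases k <;> simp_all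
    · intro h
      refine ⟨(x - t) ∘ σ.symm, ⟨?_, ?_, ?_⟩, ?_⟩
      · have := h (σ.symm 0)
        simp at this ⊢
        omega
      · have := h (σ.symm 1)
        simp at this ⊢
        omega
      · have := h (σ.symm 2)
        simp at this ⊢
        omega
      · funext m
        simp
  have h2 : σ (σ.symm 2) = 2 := by simp
  have hi : ∀ m, σ m = 2 ↔ m = σ.symm 2 := fun m => by
    rw [Equiv.eq_symm_apply]
  simp only [key, hi, ne_eq, Fin.forall_fin_succ]
  generalize σ.symm 2 = k
  fin_cases k
  · right; right; intro x; simp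
  · right; left; intro x; simp
  · left; intro x; simp

theorem mem_slabWire_iff {n : ℕ} (p : Fin n → ℤ × ℤ) (x : Fin 3 → ℤ) :
    x ∈ slabWire p ↔ (∃ i, p i = (x 0, x 1)) ∧ (x 2 = 0 ∨ x 2 = 1) := by
  have e : ∀ (a b c : ℤ), x = ![a, b, c] ↔ x 0 = a ∧ x 1 = b ∧ x 2 = c := by
    intro a b c
    simp [funext_iff, Fin.forall_fin_succ]
  simp only [slabWire, Set.mem_setOf_eq, e, Prod.ext_iff]
  grind

theorem mem_cubePair_iff {n : ℕ} (p : Fin n → ℤ × ℤ) (i : Fin n) (x : Fin 3 → ℤ) :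
    x ∈ cubePair p i ↔ x 0 = (p i).1 ∧ x 1 = (p i).2 ∧ (x 2 = 0 ∨ x 2 = 1) := by
  have e : ∀ (a b c : ℤ), x = ![a, b, c] ↔ x 0 = a ∧ x 1 = b ∧ x 2 = c := by
    intro a b c
    simp [funext_iff, Fin.forall_fin_succ]
  simp only [cubePair, Set.mem_insert_iff, Set.mem_singleton_iff, e]
  grind

theorem slab_finish {n : ℕ} (p : Fin n → ℤ × ℤ)
    (hadj : ∀ i j : Fin n, CellAdj (p i) (p j) ↔
      ((i : ℕ) + 1 = (j : ℕ) ∨ (j : ℕ) + 1 = (i : ℕ)))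
    (s : Set (Fin 3 → ℤ)) (i j : Fin n) (h : CellAdj (p i) (p j))
    (hs : s = cubePair p i ∪ cubePair p j) :
    ∃ (i : Fin n) (h : (i : ℕ) + 1 < n),
      s = cubePair p i ∪ cubePair p ⟨(i : ℕ) + 1, h⟩ := by
  rcases (hadj i j).1 h with h | h
  · refine ⟨i, by omega, ?_⟩
    have : j = ⟨(i : ℕ) + 1, by omega⟩ := Fin.ext h.symm
    rw [← this]; exact hs
  · refine ⟨j, by omega, ?_⟩
    have : i = ⟨(j : ℕ) + 1, by omega⟩ := Fin.ext h.symm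
    rw [← this, Set.union_comm]; exact hs

/-- Every slab contained in a slab-wire is the union of two consecutive cube pairs;
in particular a slab-wire contains no horizontal slab, and any slab inside it covers
each of its two cube pairs entirely. -/
theorem slab_in_slabWire
    (n : ℕ) (p : Fin n → ℤ × ℤ) (hinj : Function.Injective p)
    (hadj : ∀ i j : Fin n, CellAdj (p i) (p j) ↔ ((i : ℕ) + 1 = (j : ℕ) ∨ (j : ℕ) + 1 = (i : ℕ))) :
    ∀ s : Set (Fin 3 → ℤ), IsSlab s → s ⊆ slabWire p →
      ∃ (i : Fin n) (h : (i : ℕ) + 1 < n), s = cubePair p i ∪ cubePair p ⟨(i : ℕ) + 1, h⟩ := by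
  intro s hs hsub
  obtain ⟨t, h | h | h⟩ := isSlab_cases hs
  · exfalso
    have c : ∀ a b, (a = t 0 ∨ a = t 0 + 1) → (b = t 1 ∨ b = t 1 + 1) → ∃ i, p i = (a, b) := by
      intro a b ha hb
      have := hsub ((h ![a, b, t 2]).2 (by simp [ha, hb]))
      simpa using ((mem_slabWire_iff p _).1 this).1
    obtain ⟨i, hi⟩ := c (t 0) (t 1) (by simp) (by simp)
    obtain ⟨j, hj⟩ := c (t 0 + 1) (t 1) (by simp) (by simp)
    obtain ⟨k, hk⟩ := c (t 0 + 1) (t 1 + 1) (by simp) (by simp)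
    obtain ⟨l, hl⟩ := c (t 0) (t 1 + 1) (by simp) (by simp)
    have h1 := (hadj i j).1 (by simp [CellAdj, hi, hj])
    have h2 := (hadj j k).1 (by simp [CellAdj, hj, hk])
    have h3 := (hadj k l).1 (by simp [CellAdj, hk, hl])
    have h4 := (hadj l i).1 (by simp [CellAdj, hl, hi])
    have h5 : (i : ℕ) ≠ k := by
      intro e
      have := Fin.ext e
      subst this
      simp [hi] at hk
    have h6 : (j : ℕ) ≠ l := by
      intro e
      have := Fin.ext e
      subst this
      simp [hj] at hl
    omega
  · have c : ∀ a b, (a = t 0 ∨ a = t 0 + 1) → (b = t 2 ∨ b = t 2 + 1) →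
        (∃ i, p i = (a, t 1)) ∧ (b = 0 ∨ b = 1) := by
      intro a b ha hb
      have := hsub ((h ![a, t 1, b]).2 (by simp [ha, hb]))
      simpa using (mem_slabWire_iff p _).1 this
    obtain ⟨⟨i, hi⟩, u⟩ := c (t 0) (t 2) (by simp) (by simp)
    obtain ⟨⟨j, hj⟩, v⟩ := c (t 0 + 1) (t 2 + 1) (by simp) (by simp)
    refine slab_finish p hadj s i j (by simp [CellAdj, hi, hj]) ?_
    ext x
    rw [Set.mem_union, mem_cubePair_iff, mem_cubePair_iff, h, hi, hj]
    dsimp only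
    omega
  · have c : ∀ a b, (a = t 1 ∨ a = t 1 + 1) → (b = t 2 ∨ b = t 2 + 1) →
        (∃ i, p i = (t 0, a)) ∧ (b = 0 ∨ b = 1) := by
      intro a b ha hb
      have := hsub ((h ![t 0, a, b]).2 (by simp [ha, hb]))
      simpa using (mem_slabWire_iff p _).1 this
    obtain ⟨⟨i, hi⟩, u⟩ := c (t 1) (t 2) (by simp) (by simp)
    obtain ⟨⟨j, hj⟩, v⟩ := c (t 1 + 1) (t 2 + 1) (by simp) (by simp)
    refine slab_finish p hadj s i j (by simp [CellAdj, hi, hj]) ?_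
    ext x
    rw [Set.mem_union, mem_cubePair_iff, mem_cubePair_iff, h, hi, hj]
    dsimp only
    omega
end

section
/- Fix integers 2 ≤ r < d. Let Γ ⊂ ℤ³ be a finite set containing no translate of {0,1}³, and let Γ' = {x ∈ ℤ^d : (x₁,x₂,x₃) ∈ Γ, x₄,…,x_{r+1} ∈ {0,1}, x_{r+2} = ⋯ = x_d = 0}. Then the 𝒟_r^d-tilings of Γ' are in bijection with the slab (𝒟_2^3) tilings of Γ; in particular Γ' is 𝒟_r^d-tileable if and only if Γ is slab-tileable, and the numbers of tilings are equal. -/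
/-- A tiling of `Γ` by tiles satisfying `P`: a partition of `Γ` into such tiles. -/
def IsTiling {α : Type*} (P : Set α → Prop) (Γ : Set α) (T : Set (Set α)) : Prop :=
  (∀ s ∈ T, P s ∧ s.Nonempty) ∧ T.PairwiseDisjoint id ∧ ⋃₀ T = Γ

/-- A copy of the generalized domino `𝒟_r^d`: a translate of the image of the brick
`{0,1}^r × {0}^{d-r}` under a permutation of the `d` coordinates. -/
def IsGenDomino (d r : ℕ) (s : Set (Fin d → ℤ)) : Prop :=
  ∃ (t : Fin d → ℤ) (σ : Equiv.Perm (Fin d)),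
    s = (fun v : Fin d → ℤ => t + v ∘ ⇑σ) ''
      {v | ∀ i : Fin d, ((i : ℕ) < r → (v i = 0 ∨ v i = 1)) ∧ (r ≤ (i : ℕ) → v i = 0)}

/-- The brick at corner `t` extended in the directions of `S`. -/
def brick {n : ℕ} (t : Fin n → ℤ) (S : Finset (Fin n)) : Set (Fin n → ℤ) :=
  {x | ∀ i, (i ∈ S → (x i = t i ∨ x i = t i + 1)) ∧ (i ∉ S → x i = t i)}

lemma card_low (d r : ℕ) (h : r ≤ d) :
    (Finset.univ.filter (fun j : Fin d => (j : ℕ) < r)).card = r := by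
  rw [← Finset.card_map Fin.valEmbedding]
  have : (Finset.univ.filter (fun j : Fin d => (j : ℕ) < r)).map Fin.valEmbedding
      = Finset.range r := by
    ext a
    simp only [Finset.mem_map, Finset.mem_filter, Finset.mem_univ, true_and, Finset.mem_range,
      Fin.valEmbedding_apply]
    constructor
    · rintro ⟨j, hj, rfl⟩; exact hj
    · intro ha; exact ⟨⟨a, by omega⟩, ha, rfl⟩
  rw [this, Finset.card_range]

lemma card_mid (d r : ℕ) (hr : 2 ≤ r) (h : r < d) :
    (Finset.univ.filter (fun j : Fin d => 3 ≤ (j : ℕ) ∧ (j : ℕ) ≤ r)).card = r - 2 := by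
  rw [← Finset.card_map Fin.valEmbedding]
  have : (Finset.univ.filter (fun j : Fin d => 3 ≤ (j : ℕ) ∧ (j : ℕ) ≤ r)).map Fin.valEmbedding
      = Finset.Icc 3 r := by
    ext a
    simp only [Finset.mem_map, Finset.mem_filter, Finset.mem_univ, true_and, Finset.mem_Icc,
      Fin.valEmbedding_apply]
    constructor
    · rintro ⟨j, hj, rfl⟩; exact hj
    · intro ha; exact ⟨⟨a, by omega⟩, ha, rfl⟩
  rw [this, Nat.card_Icc]; omega

lemma image_eq_brick (d r : ℕ) (t : Fin d → ℤ) (σ : Equiv.Perm (Fin d)) (S : Finset (Fin d))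
    (hS : ∀ i, i ∈ S ↔ ((σ i : Fin d) : ℕ) < r) :
    (fun v : Fin d → ℤ => t + v ∘ ⇑σ) ''
      {v | ∀ i : Fin d, ((i : ℕ) < r → (v i = 0 ∨ v i = 1)) ∧ (r ≤ (i : ℕ) → v i = 0)}
      = brick t S := by
  ext x
  simp only [Set.mem_image, Set.mem_ofPred_eq, brick]
  constructor
  · rintro ⟨v, hv, rfl⟩ i
    have := hv (σ i)
    rw [hS]
    simp only [Pi.add_apply, Function.comp_apply, not_lt]
    refine ⟨fun h => ?_, fun h => ?_⟩
    · rcases this.1 h with h | h <;> simp [h]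
    · simp [this.2 h]
  · intro hx
    refine ⟨fun j => x (σ.symm j) - t (σ.symm j), fun j => ?_, ?_⟩
    · have := hx (σ.symm j)
      rw [hS, Equiv.apply_symm_apply] at this
      refine ⟨fun h => ?_, fun h => ?_⟩
      · rcases this.1 h with h | h <;> simp [h]
      · simp [this.2 (by omega)]
    · funext i; simp

lemma isGenDomino_iff (d r : ℕ) (h : r ≤ d) (s : Set (Fin d → ℤ)) :
    IsGenDomino d r s ↔ ∃ (t : Fin d → ℤ) (S : Finset (Fin d)), S.card = r ∧ s = brick t S := by
  constructor
  · rintro ⟨t, σ, rfl⟩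
    refine ⟨t, (Finset.univ.filter (fun j : Fin d => (j : ℕ) < r)).map σ.symm.toEmbedding, ?_, ?_⟩
    · rw [Finset.card_map, card_low d r h]
    · apply image_eq_brick
      intro i
      simp [Finset.mem_map_equiv]
  · rintro ⟨t, S, hS, rfl⟩
    have hc : Fintype.card {x // x ∈ S} = Fintype.card {x : Fin d // (x : ℕ) < r} := by
      rw [Fintype.card_coe, hS, Fintype.card_subtype, card_low d r h]
    let e := Fintype.equivOfCardEq hc
    refine ⟨t, e.extendSubtype, (image_eq_brick d r t _ S fun i => ?_).symm⟩
    constructor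
    · intro hi; exact e.extendSubtype_mem i hi
    · intro hi; by_contra hn; exact e.extendSubtype_not_mem i hn hi

/-- The thickening of a subset of `ℤ³`. -/
def lift3 (r d : ℕ) (h3 : 3 ≤ d) (s : Set (Fin 3 → ℤ)) : Set (Fin d → ℤ) :=
  {x | (fun i : Fin 3 => x (Fin.castLE h3 i)) ∈ s ∧
        ∀ i : Fin d, (3 ≤ (i : ℕ) → (i : ℕ) ≤ r → (x i = 0 ∨ x i = 1)) ∧
          (r < (i : ℕ) → x i = 0)}

/-- Extension of a vector by zeros. -/
def ext0 (d : ℕ) (y : Fin 3 → ℤ) : Fin d → ℤ :=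
  fun i => if h : (i : ℕ) < 3 then y ⟨i, h⟩ else 0

lemma ext0_cast (d : ℕ) (h3 : 3 ≤ d) (y : Fin 3 → ℤ) (i : Fin 3) :
    ext0 d y (Fin.castLE h3 i) = y i := by
  simp [ext0]

lemma ext0_mem (r d : ℕ) (hr : 2 ≤ r) (h3 : 3 ≤ d) (s : Set (Fin 3 → ℤ)) (y : Fin 3 → ℤ) :
    ext0 d y ∈ lift3 r d h3 s ↔ y ∈ s := by
  simp only [lift3, Set.mem_ofPred_eq, ext0_cast]
  refine ⟨fun h => h.1, fun h => ⟨h, fun i => ⟨fun h1 _ => Or.inl ?_, fun h1 => ?_⟩⟩⟩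
  · simp only [ext0]; rw [dif_neg (by omega)]
  · simp only [ext0]; rw [dif_neg (by omega)]

/-- The set of directions of the thickened brick. -/
def dirs (r d : ℕ) (h3 : 3 ≤ d) (S : Finset (Fin 3)) : Finset (Fin d) :=
  S.map (Fin.castLEEmb h3) ∪ Finset.univ.filter (fun j : Fin d => 3 ≤ (j : ℕ) ∧ (j : ℕ) ≤ r)

lemma mem_dirs_cast (r d : ℕ) (h3 : 3 ≤ d) (S : Finset (Fin 3)) (i : Fin 3) :
    Fin.castLE h3 i ∈ dirs r d h3 S ↔ i ∈ S := by
  have : ¬ 3 ≤ (i : ℕ) := by omega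
  simp [dirs, this]

lemma mem_dirs_ge (r d : ℕ) (h3 : 3 ≤ d) (S : Finset (Fin 3)) (i : Fin d) (hi : 3 ≤ (i : ℕ)) :
    i ∈ dirs r d h3 S ↔ (i : ℕ) ≤ r := by
  simp only [dirs, Finset.mem_union, Finset.mem_map, Finset.mem_filter, Finset.mem_univ, true_and,
    Fin.castLEEmb_apply]
  constructor
  · rintro (⟨j, _, rfl⟩ | h)
    · simp at hi; omega
    · exact h.2
  · intro h; exact Or.inr ⟨hi, h⟩

lemma card_dirs (r d : ℕ) (hr : 2 ≤ r) (hrd : r < d) (h3 : 3 ≤ d) (S : Finset (Fin 3)) :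
    (dirs r d h3 S).card = S.card + (r - 2) := by
  rw [dirs, Finset.card_union_of_disjoint, Finset.card_map, card_mid d r hr hrd]
  rw [Finset.disjoint_left]
  intro a ha hb
  simp only [Finset.mem_map, Finset.mem_filter, Finset.mem_univ, true_and,
    Fin.castLEEmb_apply] at ha hb
  obtain ⟨j, _, rfl⟩ := ha
  simp at hb; omega

lemma lift_brick (r d : ℕ) (h3 : 3 ≤ d) (t : Fin d → ℤ) (S : Finset (Fin 3))
    (ht : ∀ i : Fin d, 3 ≤ (i : ℕ) → t i = 0) (hr : 2 ≤ r) :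
    lift3 r d h3 (brick (fun i => t (Fin.castLE h3 i)) S) = brick t (dirs r d h3 S) := by
  ext x
  simp only [lift3, brick, Set.mem_ofPred_eq]
  constructor
  · rintro ⟨h1, h2⟩ i
    by_cases hi : 3 ≤ (i : ℕ)
    · rw [mem_dirs_ge r d h3 S i hi, ht i hi]
      refine ⟨fun h => by simpa using (h2 i).1 hi h, fun h => (h2 i).2 (by omega)⟩
    · have := h1 ⟨i, by omega⟩
      rw [← mem_dirs_cast r d h3 S] at this
      exact this
  · intro h
    refine ⟨fun i => ?_, fun i => ⟨fun h1 h2 => ?_, fun h1 => ?_⟩⟩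
    · rw [← mem_dirs_cast r d h3 S]; exact h _
    · have := (h i).1 ((mem_dirs_ge r d h3 S i h1).2 h2)
      simpa [ht i h1] using this
    · have h0 : 3 ≤ (i : ℕ) := by omega
      have := (h i).2 (by rw [mem_dirs_ge r d h3 S i h0]; omega)
      rw [this, ht i h0]

lemma lift_domino (r d : ℕ) (hr : 2 ≤ r) (hrd : r < d) (h3 : 3 ≤ d) (s : Set (Fin 3 → ℤ))
    (hs : IsGenDomino 3 2 s) : IsGenDomino d r (lift3 r d h3 s) := by
  rw [isGenDomino_iff _ _ (by omega)] at hs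
  rw [isGenDomino_iff _ _ (by omega)]
  obtain ⟨t, S, hS, rfl⟩ := hs
  refine ⟨ext0 d t, dirs r d h3 S, by rw [card_dirs r d hr hrd]; omega, ?_⟩
  rw [← lift_brick r d h3 _ S _ hr]
  · simp only [ext0_cast]
  · intro i hi; simp only [ext0]; rw [dif_neg (by omega)]

lemma domino_lift (r d : ℕ) (hr : 2 ≤ r) (hrd : r < d) (h3 : 3 ≤ d) (Γ : Set (Fin 3 → ℤ))
    (hnocube : ¬ ∃ t : Fin 3 → ℤ, ∀ v : Fin 3 → ℤ, (∀ i, v i = 0 ∨ v i = 1) → t + v ∈ Γ)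
    (D : Set (Fin d → ℤ)) (hD : IsGenDomino d r D) (hsub : D ⊆ lift3 r d h3 Γ) :
    ∃ s, IsGenDomino 3 2 s ∧ lift3 r d h3 s = D := by
  rw [isGenDomino_iff _ _ (by omega)] at hD
  obtain ⟨t, S', hS', rfl⟩ := hD
  have htm : t ∈ lift3 r d h3 Γ := hsub (by intro i; simp)
  have hup : ∀ j ∈ S', Function.update t j (t j + 1) ∈ lift3 r d h3 Γ := by
    intro j hj
    apply hsub
    intro i
    by_cases hij : i = j
    · subst hij; simp [hj]
    · simp [Function.update_of_ne hij]
  have hle : ∀ j ∈ S', (j : ℕ) ≤ r := by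
    intro j hj
    by_contra hn
    have h1 := (htm.2 j).2 (by omega)
    have h2 := ((hup j hj).2 j).2 (by omega)
    simp at h2; omega
  have ht0 : ∀ j ∈ S', 3 ≤ (j : ℕ) → t j = 0 := by
    intro j hj h
    have h1 := (htm.2 j).1 h (hle j hj)
    have h2 := ((hup j hj).2 j).1 h (hle j hj)
    simp at h2; omega
  set S : Finset (Fin 3) := Finset.univ.filter (fun i => Fin.castLE h3 i ∈ S') with hSdef
  have hS3 : S.card ≤ 2 := by
    by_contra hn
    have hu : S = Finset.univ := by
      apply Finset.eq_univ_of_card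
      have := Finset.card_le_univ S
      simp at this ⊢; omega
    apply hnocube
    refine ⟨fun i => t (Fin.castLE h3 i), fun v hv => ?_⟩
    have hm : t + ext0 d v ∈ lift3 r d h3 Γ := by
      apply hsub
      intro i
      by_cases hi : (i : ℕ) < 3
      · have : (⟨i, hi⟩ : Fin 3) ∈ S := by rw [hu]; simp
        have hiS : i ∈ S' := by
          simpa [hSdef] using this
        have := hv ⟨i, hi⟩
        simp [hiS, ext0, hi, this]
      · simp [ext0, hi]
    have := hm.1
    simp only [Pi.add_apply, ext0_cast] at this
    exact this
  have hsub' : S' ⊆ dirs r d h3 S := by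
    intro j hj
    by_cases h : 3 ≤ (j : ℕ)
    · rw [mem_dirs_ge r d h3 S j h]; exact hle j hj
    · have : Fin.castLE h3 ⟨j, by omega⟩ ∈ dirs r d h3 S := by
        rw [mem_dirs_cast, hSdef]
        simpa using hj
      exact this
  have hcd := card_dirs r d hr hrd h3 S
  have hcle := Finset.card_le_card hsub'
  have heq : S' = dirs r d h3 S := Finset.eq_of_subset_of_card_le hsub' (by omega)
  have ht : ∀ i : Fin d, 3 ≤ (i : ℕ) → t i = 0 := by
    intro i hi
    by_cases h : (i : ℕ) ≤ r
    · exact ht0 i (by rw [heq, mem_dirs_ge r d h3 S i hi]; exact h) hi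
    · exact (htm.2 i).2 (by omega)
  refine ⟨brick (fun i => t (Fin.castLE h3 i)) S, ?_, ?_⟩
  · rw [isGenDomino_iff _ _ (by omega)]
    exact ⟨_, _, by omega, rfl⟩
  · rw [lift_brick r d h3 t S ht hr, ← heq]

lemma lift_injective (r d : ℕ) (hr : 2 ≤ r) (h3 : 3 ≤ d) :
    Function.Injective (lift3 r d h3) := by
  intro s s' h
  ext y
  rw [← ext0_mem r d hr h3 s, h, ext0_mem r d hr h3]

lemma lift_tiling_iff (r d : ℕ) (hr : 2 ≤ r) (hrd : r < d) (h3 : 3 ≤ d) (Γ : Set (Fin 3 → ℤ))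
    (T : Set (Set (Fin 3 → ℤ))) (hT : IsTiling (IsGenDomino 3 2) Γ T) :
    IsTiling (IsGenDomino d r) (lift3 r d h3 Γ) (lift3 r d h3 '' T) := by
  obtain ⟨h1, h2, h4⟩ := hT
  refine ⟨?_, ?_, ?_⟩
  · rintro _ ⟨s, hs, rfl⟩
    obtain ⟨hd, y, hy⟩ := h1 s hs
    exact ⟨lift_domino r d hr hrd h3 s hd, ext0 d y, (ext0_mem r d hr h3 s y).2 hy⟩
  · rintro _ ⟨s, hs, rfl⟩ _ ⟨s', hs', rfl⟩ hne
    have hne' : s ≠ s' := fun h => hne (by rw [h])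
    have := h2 hs hs' hne'
    simp only [Function.onFun, id] at this ⊢
    rw [Set.disjoint_left] at this ⊢
    intro x hx hx'
    exact this hx.1 hx'.1
  · ext x
    rw [← h4]
    constructor
    · rintro ⟨_, ⟨s, hs, rfl⟩, hx⟩
      exact ⟨⟨s, hs, hx.1⟩, hx.2⟩
    · rintro ⟨⟨s, hs, hx⟩, hx2⟩
      exact ⟨_, ⟨s, hs, rfl⟩, ⟨hx, hx2⟩⟩

lemma lift_tiling_surj (r d : ℕ) (hr : 2 ≤ r) (hrd : r < d) (h3 : 3 ≤ d) (Γ : Set (Fin 3 → ℤ))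
    (hnocube : ¬ ∃ t : Fin 3 → ℤ, ∀ v : Fin 3 → ℤ, (∀ i, v i = 0 ∨ v i = 1) → t + v ∈ Γ)
    (T' : Set (Set (Fin d → ℤ))) (hT : IsTiling (IsGenDomino d r) (lift3 r d h3 Γ) T') :
    ∃ T, IsTiling (IsGenDomino 3 2) Γ T ∧ lift3 r d h3 '' T = T' := by
  obtain ⟨h1, h2, h4⟩ := hT
  have key : ∀ D ∈ T', ∃ s, IsGenDomino 3 2 s ∧ lift3 r d h3 s = D := fun D hD =>
    domino_lift r d hr hrd h3 Γ hnocube D (h1 D hD).1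
      (by rw [← h4]; exact Set.subset_sUnion_of_mem hD)
  refine ⟨lift3 r d h3 ⁻¹' T', ⟨?_, ?_, ?_⟩, ?_⟩
  · intro s hs
    obtain ⟨s', hs', he⟩ := key _ hs
    rw [lift_injective r d hr h3 he] at hs'
    obtain ⟨x, hx⟩ := (h1 _ hs).2
    exact ⟨hs', _, hx.1⟩
  · intro s hs s' hs' hne
    have := h2 hs hs' (fun h => hne (lift_injective r d hr h3 h))
    simp only [Function.onFun, id] at this ⊢
    rw [Set.disjoint_left] at this ⊢
    intro y hy hy'
    exact this ((ext0_mem r d hr h3 s y).2 hy) ((ext0_mem r d hr h3 s' y).2 hy')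
  · ext y
    rw [← ext0_mem r d hr h3 Γ, ← h4]
    constructor
    · rintro ⟨s, hs, hy⟩
      exact ⟨_, hs, (ext0_mem r d hr h3 s y).2 hy⟩
    · rintro ⟨D, hD, hy⟩
      obtain ⟨s, _, rfl⟩ := key D hD
      exact ⟨s, hD, (ext0_mem r d hr h3 s y).1 hy⟩
  · apply Set.image_preimage_eq_of_subset
    intro D hD
    obtain ⟨s, _, rfl⟩ := key D hD
    exact ⟨s, rfl⟩

/-- For `2 ≤ r < d`, if `Γ ⊂ ℤ³` is finite and contains no translate of `{0,1}³`,
and `Γ' ⊂ ℤ^d` is obtained from `Γ` by thickening along `r - 2` extra coordinates,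
then the `𝒟_r^d`-tilings of `Γ'` are in bijection with the slab (`𝒟_2^3`) tilings
of `Γ`; in particular tileability and the numbers of tilings agree. -/
theorem genDomino_tilings_biject_slab_tilings
    (r d : ℕ) (hr : 2 ≤ r) (hrd : r < d)
    (Γ : Set (Fin 3 → ℤ)) (hΓ : Γ.Finite)
    (hnocube : ¬ ∃ t : Fin 3 → ℤ, ∀ v : Fin 3 → ℤ, (∀ i, v i = 0 ∨ v i = 1) → t + v ∈ Γ) :
    let Γ' : Set (Fin d → ℤ) :=
      {x | (fun i : Fin 3 => x (Fin.castLE (by omega) i)) ∈ Γ ∧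
        ∀ i : Fin d, (3 ≤ (i : ℕ) → (i : ℕ) ≤ r → (x i = 0 ∨ x i = 1)) ∧
          (r < (i : ℕ) → x i = 0)}
    Nonempty ({T // IsTiling (IsGenDomino d r) Γ' T} ≃ {T // IsTiling (IsGenDomino 3 2) Γ T}) ∧
    ((∃ T, IsTiling (IsGenDomino d r) Γ' T) ↔ ∃ T, IsTiling (IsGenDomino 3 2) Γ T) ∧
    {T | IsTiling (IsGenDomino d r) Γ' T}.ncard = {T | IsTiling (IsGenDomino 3 2) Γ T}.ncard := by
  intro Γ'
  have h3 : 3 ≤ d := by omega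
  have e : {T // IsTiling (IsGenDomino 3 2) Γ T} ≃ {T // IsTiling (IsGenDomino d r) Γ' T} := by
    refine Equiv.ofBijective
      (fun T => ⟨lift3 r d h3 '' T.1, lift_tiling_iff r d hr hrd h3 Γ T.1 T.2⟩) ⟨?_, ?_⟩
    · intro T U h
      apply Subtype.ext
      have := congrArg Subtype.val h
      exact (lift_injective r d hr h3).image_injective this
    · intro T'
      obtain ⟨T, hT, he⟩ := lift_tiling_surj r d hr hrd h3 Γ hnocube T'.1 T'.2
      exact ⟨⟨T, hT⟩, Subtype.ext he⟩
  refine ⟨⟨e.symm⟩, ⟨?_, ?_⟩, ?_⟩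
  · rintro ⟨T, hT⟩; exact ⟨_, (e.symm ⟨T, hT⟩).2⟩
  · rintro ⟨T, hT⟩; exact ⟨_, (e ⟨T, hT⟩).2⟩
  · exact Nat.card_congr e.symm
end

section
/- Domino tilings of contractible regions in ℝ³ do not have the local move property: for every n ∈ ℕ there exists a contractible region Γ ⊂ ℤ³ that has exactly two domino tilings T₁ ≠ T₂, and these two tilings differ in at least n tiles (|T₁ ∖ T₂| ≥ n); in particular T₂ cannot be obtained from T₁ by a sequence of flips each involving a bounded number of tiles. -/
/-- A domino is a set of two adjacent cubes. -/
def IsDomino {d : ℕ} (s : Set (Fin d → ℤ)) : Prop :=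
  ∃ a b : Fin d → ℤ, CubeAdj a b ∧ s = {a, b}

/-- The closed region `Γ̄ = ⋃_{v ∈ Γ} (v + [0,1]^d) ⊂ ℝ^d` associated to `Γ ⊂ ℤ^d`. -/
def cubeClosure {d : ℕ} (Γ : Set (Fin d → ℤ)) : Set (Fin d → ℝ) :=
  ⋃ v ∈ Γ, {x : Fin d → ℝ | ∀ i, (v i : ℝ) ≤ x i ∧ x i ≤ (v i : ℝ) + 1}

/-- A contractible region: a finite `Γ ⊂ ℤ^d` such that `Γ̄` is contractible and has
contractible interior. -/
def IsContractibleRegion {d : ℕ} (Γ : Set (Fin d → ℤ)) : Prop :=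
  Γ.Finite ∧ ContractibleSpace ↥(cubeClosure Γ) ∧
    ContractibleSpace ↥(interior (cubeClosure Γ))


namespace DominoAux

lemma adj_iff (a b c a' b' c' : ℤ) : CubeAdj ![a, b, c] ![a', b', c'] ↔
    (b = b' ∧ c = c' ∧ (a = a' + 1 ∨ a' = a + 1)) ∨
    (a = a' ∧ c = c' ∧ (b = b' + 1 ∨ b' = b + 1)) ∨
    (a = a' ∧ b = b' ∧ (c = c' + 1 ∨ c' = c + 1)) := by
  unfold CubeAdj
  simp only [Fin.exists_fin_succ, funext_iff, Fin.forall_fin_succ, Pi.add_apply, Pi.single_apply]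
  simp
  omega

lemma eta3 {α : Type*} (v : Fin 3 → α) : v = ![v 0, v 1, v 2] := by
  ext i; fin_cases i <;> rfl

lemma vec_eq {α : Type*} {a b c a' b' c' : α} :
    (![a, b, c] : Fin 3 → α) = ![a', b', c'] ↔ a = a' ∧ b = b' ∧ c = c' := by
  simp

/-- Membership predicate of the region: a flat `(2N+1) × 3` rectangle, whose inner cells carry
leaves sticking out alternately upwards and downwards. -/
def G (N i j k : ℤ) : Prop :=
  0 ≤ i ∧ i ≤ 2 * N ∧ -1 ≤ j ∧ j ≤ 1 ∧
    (k = 0 ∨ (j = 0 ∧ 0 < i ∧ i < 2 * N ∧ ((i % 2 = 0 ∧ k = 1) ∨ (i % 2 = 1 ∧ k = -1))))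

/-- The region. -/
def Reg (N : ℤ) : Set (Fin 3 → ℤ) := {v | G N (v 0) (v 1) (v 2)}

lemma mem_Reg {N i j k : ℤ} : ![i, j, k] ∈ Reg N ↔ G N i j k := Iff.rfl

lemma Reg_finite (N : ℤ) : (Reg N).Finite := by
  apply (Set.finite_Icc (![0, -1, -1] : Fin 3 → ℤ) ![2 * N, 1, 1]).subset
  intro v hv
  simp only [Reg, Set.mem_setOf_eq, G] at hv
  rw [Set.mem_Icc, Pi.le_def, Pi.le_def]
  simp only [Fin.forall_fin_succ]
  simp
  omega

/-- First coordinate of the partner. -/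
def f0 (N s i j : ℤ) : ℤ :=
  if j = 0 then i
  else if j = s then (if i = 0 then 0 else if i % 2 = 1 then i + 1 else i - 1)
  else (if i = 2 * N then i else if i % 2 = 0 then i + 1 else i - 1)

/-- Second coordinate of the partner. -/
def f1 (N s i j : ℤ) : ℤ :=
  if j = 0 then (if i = 0 then s else if i = 2 * N then -s else 0)
  else if j = s then (if i = 0 then 0 else s)
  else (if i = 2 * N then 0 else -s)

/-- Third coordinate of the partner. -/
def f2 (N i j k : ℤ) : ℤ :=
  if j = 0 ∧ 0 < i ∧ i < 2 * N ∧ k = 0 then (if i % 2 = 0 then 1 else -1) else 0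

/-- The partner map of the tiling `s`. -/
def f (N s : ℤ) (v : Fin 3 → ℤ) : Fin 3 → ℤ :=
  ![f0 N s (v 0) (v 1), f1 N s (v 0) (v 1), f2 N (v 0) (v 1) (v 2)]

/-- The tiling `s`. -/
def Til (N s : ℤ) : Set (Set (Fin 3 → ℤ)) := (fun v => {v, f N s v}) '' Reg N

lemma f_mem {N s : ℤ} (hN : 1 ≤ N) (hs : s = 1 ∨ s = -1) {v : Fin 3 → ℤ} (hv : v ∈ Reg N) :
    f N s v ∈ Reg N := by
  rw [eta3 v] at hv ⊢
  generalize v 0 = i at *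
  generalize v 1 = j at *
  generalize v 2 = k at *
  rw [mem_Reg] at hv
  show G N (f0 N s i j) (f1 N s i j) (f2 N i j k)
  unfold G at *
  unfold f0 f1 f2
  rcases hs with rfl | rfl <;> split_ifs <;> omega

lemma f_adj {N s : ℤ} (hN : 1 ≤ N) (hs : s = 1 ∨ s = -1) {v : Fin 3 → ℤ} (hv : v ∈ Reg N) :
    CubeAdj v (f N s v) := by
  rw [eta3 v] at hv ⊢
  generalize v 0 = i at *
  generalize v 1 = j at *
  generalize v 2 = k at *
  rw [mem_Reg] at hv
  show CubeAdj ![i, j, k] ![f0 N s i j, f1 N s i j, f2 N i j k]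
  rw [adj_iff]
  unfold G at *
  unfold f0 f1 f2
  rcases hs with rfl | rfl <;> split_ifs <;> omega

lemma f_inv {N s : ℤ} (hN : 1 ≤ N) (hs : s = 1 ∨ s = -1) {v : Fin 3 → ℤ} (hv : v ∈ Reg N) :
    f N s (f N s v) = v := by
  rw [eta3 v] at hv ⊢
  generalize v 0 = i at *
  generalize v 1 = j at *
  generalize v 2 = k at *
  rw [mem_Reg] at hv
  show ![f0 N s (f0 N s i j) (f1 N s i j), f1 N s (f0 N s i j) (f1 N s i j),
    f2 N (f0 N s i j) (f1 N s i j) (f2 N i j k)] = ![i, j, k]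
  rw [vec_eq]
  unfold G at *
  obtain ⟨a, ha⟩ : ∃ a, a = f0 N s i j := ⟨_, rfl⟩
  obtain ⟨b, hb⟩ : ∃ a, a = f1 N s i j := ⟨_, rfl⟩
  obtain ⟨c, hc⟩ : ∃ a, a = f2 N i j k := ⟨_, rfl⟩
  rw [← ha, ← hb, ← hc]
  unfold f0 at ha
  unfold f1 at hb
  unfold f2 at hc
  refine ⟨?_, ?_, ?_⟩
  · clear hc
    unfold f0
    rcases hs with rfl | rfl <;> split_ifs at ha hb <;> split_ifs <;> omega
  · clear hc
    unfold f1
    rcases hs with rfl | rfl <;> split_ifs at ha hb <;> split_ifs <;> omega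
  · unfold f2
    rcases hs with rfl | rfl <;> split_ifs at ha hb hc <;> split_ifs <;> omega

lemma Til_tiling {N s : ℤ} (hN : 1 ≤ N) (hs : s = 1 ∨ s = -1) :
    IsTiling IsDomino (Reg N) (Til N s) := by
  refine ⟨?_, ?_, ?_⟩
  · rintro _ ⟨v, hv, rfl⟩
    exact ⟨⟨v, f N s v, f_adj hN hs hv, rfl⟩, ⟨v, by simp⟩⟩
  · have key : ∀ v ∈ Reg N, ∀ x ∈ ({v, f N s v} : Set (Fin 3 → ℤ)),
        ({v, f N s v} : Set (Fin 3 → ℤ)) = {x, f N s x} := by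
      intro v hv x hx
      rcases hx with rfl | hx
      · rfl
      · rw [Set.mem_singleton_iff] at hx
        subst hx
        rw [f_inv hN hs hv, Set.pair_comm]
    rintro _ ⟨v, hv, rfl⟩ _ ⟨w, hw, rfl⟩ hne
    rw [Function.onFun, Set.disjoint_left]
    intro x hx hx'
    exact hne ((key v hv x hx).trans (key w hw x hx').symm)
  · ext x
    constructor
    · rintro ⟨_, ⟨v, hv, rfl⟩, hx⟩
      rcases hx with rfl | hx
      · exact hv
      · rw [Set.mem_singleton_iff] at hx
        subst hx
        exact f_mem hN hs hv
    · intro hx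
      exact ⟨_, ⟨x, hx, rfl⟩, by simp⟩

section tiling
variable {N : ℤ} {T : Set (Set (Fin 3 → ℤ))}

lemma cubeAdj_symm {a b : Fin 3 → ℤ} (h : CubeAdj a b) : CubeAdj b a := by
  obtain ⟨i, h⟩ := h
  exact ⟨i, h.symm⟩

lemma partner (hT : IsTiling IsDomino (Reg N) T) {i j k : ℤ} (h : G N i j k) :
    ∃ i' j' k', G N i' j' k' ∧ CubeAdj ![i, j, k] ![i', j', k'] ∧
      {![i, j, k], ![i', j', k']} ∈ T := by
  obtain ⟨h1, h2, h3⟩ := hT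
  have hp : ![i, j, k] ∈ ⋃₀ T := by rw [h3]; exact h
  obtain ⟨t, ht, hpt⟩ := hp
  obtain ⟨⟨a, b, hab, rfl⟩, -⟩ := h1 t ht
  have hin : ∀ x ∈ ({a, b} : Set (Fin 3 → ℤ)), x ∈ Reg N := by
    intro x hx; rw [← h3]; exact ⟨_, ht, hx⟩
  have main : ∀ q : Fin 3 → ℤ, q ∈ Reg N → CubeAdj ![i, j, k] q → {![i, j, k], q} ∈ T →
      ∃ i' j' k', G N i' j' k' ∧ CubeAdj ![i, j, k] ![i', j', k'] ∧
      {![i, j, k], ![i', j', k']} ∈ T := by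
    intro q hq hadj hqT
    rw [eta3 q] at hadj hqT
    exact ⟨_, _, _, hq, hadj, hqT⟩
  rcases hpt with rfl | hpt
  · exact main b (hin b (by simp)) hab ht
  · rw [Set.mem_singleton_iff] at hpt
    subst hpt
    exact main a (hin a (by simp)) (cubeAdj_symm hab) (by rwa [Set.pair_comm])

lemma tile_eq (hT : IsTiling IsDomino (Reg N) T) {t u : Set (Fin 3 → ℤ)} (ht : t ∈ T)
    (hu : u ∈ T) {x : Fin 3 → ℤ} (hxt : x ∈ t) (hxu : x ∈ u) : t = u := by
  by_contra hne
  exact Set.disjoint_left.1 (hT.2.1 ht hu hne) hxt hxu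

lemma partner_unique (hT : IsTiling IsDomino (Reg N) T) {p q r : Fin 3 → ℤ}
    (h1 : {p, q} ∈ T) (h2 : {p, r} ∈ T) : q = r := by
  have h := tile_eq hT h1 h2 (x := p) (by simp) (by simp)
  have hq : q ∈ ({p, r} : Set (Fin 3 → ℤ)) := by rw [← h]; simp
  have hr : r ∈ ({p, q} : Set (Fin 3 → ℤ)) := by rw [h]; simp
  simp only [Set.mem_insert_iff, Set.mem_singleton_iff] at hq hr
  rcases hq with rfl | rfl
  · rcases hr with rfl | rfl <;> rfl
  · rfl

/-- Being matched, in coordinates. -/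
def D (T : Set (Set (Fin 3 → ℤ))) (i j k i' j' k' : ℤ) : Prop :=
  ({![i, j, k], ![i', j', k']} : Set (Fin 3 → ℤ)) ∈ T

lemma D_symm {i j k i' j' k' : ℤ} (h : D T i j k i' j' k') : D T i' j' k' i j k := by
  unfold D at *
  rwa [Set.pair_comm]

lemma D_unique (hT : IsTiling IsDomino (Reg N) T) {i j k a b c a' b' c' : ℤ}
    (h1 : D T i j k a b c) (h2 : D T i j k a' b' c') : a = a' ∧ b = b' ∧ c = c' :=
  vec_eq.1 (partner_unique hT h1 h2)

lemma D_unique' (hT : IsTiling IsDomino (Reg N) T) {i j k a b c a' b' c' : ℤ}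
    (h1 : D T a b c i j k) (h2 : D T a' b' c' i j k) : a = a' ∧ b = b' ∧ c = c' :=
  D_unique hT (D_symm h1) (D_symm h2)

lemma D_partner (hT : IsTiling IsDomino (Reg N) T) {i j k : ℤ} (h : G N i j k) :
    ∃ i' j' k', G N i' j' k' ∧ ((j = j' ∧ k = k' ∧ (i = i' + 1 ∨ i' = i + 1)) ∨
    (i = i' ∧ k = k' ∧ (j = j' + 1 ∨ j' = j + 1)) ∨
    (i = i' ∧ j = j' ∧ (k = k' + 1 ∨ k' = k + 1))) ∧ D T i j k i' j' k' := by
  obtain ⟨i', j', k', h1, h2, h3⟩ := partner hT h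
  exact ⟨i', j', k', h1, (adj_iff _ _ _ _ _ _).1 h2, h3⟩

lemma leaf (hT : IsTiling IsDomino (Reg N) T) {i : ℤ} (h0 : 0 < i) (h1 : i < 2 * N) :
    D T i 0 0 i 0 (if i % 2 = 0 then 1 else -1) := by
  apply D_symm
  have hG : G N i 0 (if i % 2 = 0 then 1 else -1) := by
    unfold G; split_ifs <;> omega
  obtain ⟨i', j', k', hG', hadj, hD⟩ := D_partner hT hG
  have : i' = i ∧ j' = 0 ∧ k' = 0 := by
    unfold G at hG'
    split_ifs at hadj <;> omega
  obtain ⟨rfl, rfl, rfl⟩ := this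
  exact hD

lemma start (hN : 1 ≤ N) (hT : IsTiling IsDomino (Reg N) T) :
    D T 0 0 0 0 1 0 ∨ D T 0 0 0 0 (-1) 0 := by
  obtain ⟨i', j', k', hG', hadj, hD⟩ := D_partner hT (i := 0) (j := 0) (k := 0)
    (by unfold G; omega)
  have h1 : ¬ (i' = 1 ∧ j' = 0 ∧ k' = 0) := by
    rintro ⟨rfl, rfl, rfl⟩
    have := D_unique hT (D_symm hD) (leaf hT (i := 1) (by omega) (by omega))
    omega
  have : i' = 0 ∧ k' = 0 ∧ (j' = 1 ∨ j' = -1) := by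
    unfold G at hG'
    omega
  obtain ⟨rfl, rfl, rfl | rfl⟩ := this
  · exact Or.inl hD
  · exact Or.inr hD

lemma row_pos (hT : IsTiling IsDomino (Reg N) T) {s : ℤ}
    (hs : s = 1 ∨ s = -1) (h0 : D T 0 0 0 0 s 0) (k : ℕ) (hk : (k : ℤ) < N) :
    D T (2 * k + 1) s 0 (2 * k + 2) s 0 := by
  induction k with
  | zero =>
    obtain ⟨i', j', k', hG', hadj, hD⟩ := D_partner hT (i := 2 * (0 : ℕ) + 1) (j := s) (k := 0)
      (by unfold G; omega)
    have h1 : ¬ (i' = 0 ∧ j' = s ∧ k' = 0) := by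
      rintro ⟨rfl, rfl, rfl⟩
      have := D_unique' hT h0 hD
      omega
    have h2 : ¬ (i' = 1 ∧ j' = 0 ∧ k' = 0) := by
      rintro ⟨rfl, rfl, rfl⟩
      have := D_unique hT (D_symm hD) (leaf hT (i := 1) (by omega) (by omega))
      omega
    have : i' = 2 * (0 : ℕ) + 2 ∧ j' = s ∧ k' = 0 := by
      unfold G at hG'
      omega
    obtain ⟨rfl, rfl, rfl⟩ := this
    exact hD
  | succ k ih =>
    push_cast at *
    have ih := ih (by omega)
    obtain ⟨i', j', k', hG', hadj, hD⟩ := D_partner hT (i := 2 * ((k : ℤ) + 1) + 1) (j := s)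
      (k := 0) (by unfold G; omega)
    have h1 : ¬ (i' = 2 * k + 2 ∧ j' = s ∧ k' = 0) := by
      rintro ⟨rfl, rfl, rfl⟩
      have := D_unique' hT ih hD
      omega
    have h2 : ¬ (i' = 2 * ((k : ℤ) + 1) + 1 ∧ j' = 0 ∧ k' = 0) := by
      rintro ⟨rfl, rfl, rfl⟩
      have := D_unique hT (D_symm hD) (leaf hT (by omega) (by omega))
      omega
    have : i' = 2 * ((k : ℤ) + 1) + 2 ∧ j' = s ∧ k' = 0 := by
      unfold G at hG'
      omega
    obtain ⟨rfl, rfl, rfl⟩ := this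
    exact hD

lemma row_neg (hT : IsTiling IsDomino (Reg N) T) {s : ℤ}
    (hs : s = 1 ∨ s = -1) (h0 : D T 0 0 0 0 s 0) (k : ℕ) (hk : (k : ℤ) < N) :
    D T (2 * k) (-s) 0 (2 * k + 1) (-s) 0 := by
  induction k with
  | zero =>
    obtain ⟨i', j', k', hG', hadj, hD⟩ := D_partner hT (i := 2 * (0 : ℕ)) (j := -s) (k := 0)
      (by unfold G; omega)
    have h1 : ¬ (i' = 0 ∧ j' = 0 ∧ k' = 0) := by
      rintro ⟨rfl, rfl, rfl⟩
      have := D_unique hT h0 (D_symm hD)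
      omega
    have : i' = 2 * (0 : ℕ) + 1 ∧ j' = -s ∧ k' = 0 := by
      unfold G at hG'
      omega
    obtain ⟨rfl, rfl, rfl⟩ := this
    exact hD
  | succ k ih =>
    push_cast at *
    have ih := ih (by omega)
    obtain ⟨i', j', k', hG', hadj, hD⟩ := D_partner hT (i := 2 * ((k : ℤ) + 1)) (j := -s)
      (k := 0) (by unfold G; omega)
    have h1 : ¬ (i' = 2 * k + 1 ∧ j' = -s ∧ k' = 0) := by
      rintro ⟨rfl, rfl, rfl⟩
      have := D_unique' hT ih hD
      omega
    have h2 : ¬ (i' = 2 * ((k : ℤ) + 1) ∧ j' = 0 ∧ k' = 0) := by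
      rintro ⟨rfl, rfl, rfl⟩
      have := D_unique hT (D_symm hD) (leaf hT (by omega) (by omega))
      omega
    have : i' = 2 * ((k : ℤ) + 1) + 1 ∧ j' = -s ∧ k' = 0 := by
      unfold G at hG'
      omega
    obtain ⟨rfl, rfl, rfl⟩ := this
    exact hD

lemma last (hN : 1 ≤ N) (hT : IsTiling IsDomino (Reg N) T) {s : ℤ}
    (hs : s = 1 ∨ s = -1) (h0 : D T 0 0 0 0 s 0) :
    D T (2 * N) (-s) 0 (2 * N) 0 0 := by
  obtain ⟨i', j', k', hG', hadj, hD⟩ := D_partner hT (i := 2 * N) (j := -s) (k := 0)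
    (by unfold G; omega)
  have h1 : ¬ (i' = 2 * N - 1 ∧ j' = -s ∧ k' = 0) := by
    rintro ⟨rfl, rfl, rfl⟩
    have h := row_neg hT hs h0 (N - 1).toNat (by omega)
    have e : 2 * (((N - 1).toNat : ℕ) : ℤ) + 1 = 2 * N - 1 := by omega
    rw [e] at h
    have := D_unique' hT h hD
    omega
  have : i' = 2 * N ∧ j' = 0 ∧ k' = 0 := by
    unfold G at hG'
    omega
  obtain ⟨rfl, rfl, rfl⟩ := this
  exact hD

lemma forced (hN : 1 ≤ N) (hT : IsTiling IsDomino (Reg N) T) {s : ℤ}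
    (hs : s = 1 ∨ s = -1) (h0 : D T 0 0 0 0 s 0) {i j k : ℤ} (hG : G N i j k) :
    D T i j k (f0 N s i j) (f1 N s i j) (f2 N i j k) := by
  have hpos : ∀ m : ℤ, 0 ≤ m → m < N → D T (2 * m + 1) s 0 (2 * m + 2) s 0 := by
    intro m hm hm'
    have := row_pos hT hs h0 m.toNat (by omega)
    rwa [Int.toNat_of_nonneg hm] at this
  have hneg : ∀ m : ℤ, 0 ≤ m → m < N → D T (2 * m) (-s) 0 (2 * m + 1) (-s) 0 := by
    intro m hm hm'
    have := row_neg hT hs h0 m.toNat (by omega)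
    rwa [Int.toNat_of_nonneg hm] at this
  have hlast := last hN hT hs h0
  have tr : ∀ {a b c a' b' c' x y z x' y' z' : ℤ}, D T a b c a' b' c' →
      (a = x ∧ b = y ∧ c = z ∧ a' = x' ∧ b' = y' ∧ c' = z') → D T x y z x' y' z' := by
    rintro a b c a' b' c' x y z x' y' z' h ⟨rfl, rfl, rfl, rfl, rfl, rfl⟩
    exact h
  by_cases hj : j = 0
  · subst hj
    by_cases hi : 0 < i ∧ i < 2 * N
    · have hl := leaf hT hi.1 hi.2
      by_cases hk : k = 0
      · refine tr hl ?_
        unfold f0 f1 f2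
        split_ifs <;> omega
      · refine tr (D_symm hl) ?_
        unfold G at hG
        unfold f0 f1 f2
        split_ifs <;> omega
    · by_cases hi0 : i = 0
      · refine tr h0 ?_
        unfold G at hG
        unfold f0 f1 f2
        split_ifs <;> omega
      · refine tr (D_symm hlast) ?_
        unfold G at hG
        unfold f0 f1 f2
        split_ifs <;> omega
  · by_cases hjs : j = s
    · by_cases hi0 : i = 0
      · refine tr (D_symm h0) ?_
        unfold G at hG
        unfold f0 f1 f2
        split_ifs <;> omega
      · by_cases hp : i % 2 = 1
        · refine tr (hpos (i / 2) (by unfold G at hG; omega) (by unfold G at hG; omega)) ?_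
          unfold G at hG
          unfold f0 f1 f2
          split_ifs <;> omega
        · refine tr (D_symm (hpos (i / 2 - 1) (by unfold G at hG; omega)
            (by unfold G at hG; omega))) ?_
          unfold G at hG
          unfold f0 f1 f2
          split_ifs <;> omega
    · by_cases hi0 : i = 2 * N
      · refine tr hlast ?_
        unfold G at hG
        unfold f0 f1 f2
        split_ifs <;> omega
      · by_cases hp : i % 2 = 0
        · refine tr (hneg (i / 2) (by unfold G at hG; omega) (by unfold G at hG; omega)) ?_
          unfold G at hG
          unfold f0 f1 f2
          split_ifs <;> omega
        · refine tr (D_symm (hneg (i / 2) (by unfold G at hG; omega)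
            (by unfold G at hG; omega))) ?_
          unfold G at hG
          unfold f0 f1 f2
          split_ifs <;> omega

lemma eq_Til (hN : 1 ≤ N) (hT : IsTiling IsDomino (Reg N) T) {s : ℤ}
    (hs : s = 1 ∨ s = -1) (h0 : D T 0 0 0 0 s 0) : T = Til N s := by
  have hsub : ∀ v ∈ Reg N, ({v, f N s v} : Set (Fin 3 → ℤ)) ∈ T := by
    intro v hv
    have h := forced hN hT hs h0 (i := v 0) (j := v 1) (k := v 2) hv
    unfold D at h
    rw [← eta3 v] at h
    exact h
  apply Set.Subset.antisymm
  · intro t ht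
    obtain ⟨x, hx⟩ := (hT.1 t ht).2
    have hxR : x ∈ Reg N := by rw [← hT.2.2]; exact ⟨t, ht, hx⟩
    exact ⟨x, hxR, tile_eq hT (hsub x hxR) ht (x := x) (by simp) hx⟩
  · rintro _ ⟨v, hv, rfl⟩
    exact hsub v hv

end tiling

lemma D_Til {N s : ℤ} {i j k : ℤ} (h : G N i j k) :
    D (Til N s) i j k (f0 N s i j) (f1 N s i j) (f2 N i j k) :=
  ⟨![i, j, k], h, rfl⟩

lemma diff_card (n : ℕ) : n ≤ (Til (n + 1) 1 \ Til (n + 1) (-1)).ncard := by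
  have hN : (1 : ℤ) ≤ n + 1 := by omega
  have hfin : (Til (n + 1) 1 \ Til (n + 1) (-1)).Finite :=
    ((Reg_finite _).image _).subset Set.diff_subset
  let g : ℕ → Set (Fin 3 → ℤ) := fun k =>
    {![2 * (k : ℤ) + 1, 1, 0], ![2 * (k : ℤ) + 2, 1, 0]}
  have hg : Set.InjOn g (Finset.range n : Set ℕ) := by
    intro a _ b _ hab
    have h1 : (![2 * (a : ℤ) + 1, 1, 0] : Fin 3 → ℤ) ∈ g b := by rw [← hab]; simp [g]
    simp only [g, Set.mem_insert_iff, Set.mem_singleton_iff, vec_eq] at h1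
    omega
  have hsub : g '' (Finset.range n : Set ℕ) ⊆ Til (n + 1) 1 \ Til (n + 1) (-1) := by
    rintro _ ⟨k, hk, rfl⟩
    have hk' : k < n := by simpa using hk
    have hG : G ((n : ℤ) + 1) (2 * k + 1) 1 0 := by unfold G; omega
    constructor
    · have h := D_Til (s := 1) hG
      have e : f0 ((n : ℤ) + 1) 1 (2 * k + 1) 1 = 2 * k + 2 ∧
          f1 ((n : ℤ) + 1) 1 (2 * k + 1) 1 = 1 ∧
          f2 ((n : ℤ) + 1) (2 * k + 1) 1 0 = 0 := by
        unfold f0 f1 f2; split_ifs <;> omega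
      rw [e.1, e.2.1, e.2.2] at h
      exact h
    · intro h'
      have h := D_Til (s := -1) hG
      have hu := D_unique (Til_tiling hN (Or.inr rfl)) h h'
      unfold f0 f1 f2 at hu
      split_ifs at hu <;> omega
  calc n = (g '' (Finset.range n : Set ℕ)).ncard := by
        rw [Set.ncard_image_of_injOn hg, Set.ncard_coe_finset, Finset.card_range]
    _ ≤ _ := Set.ncard_le_ncard hsub hfin

/-- Flattening onto the middle plane. -/
noncomputable def pr (x : Fin 3 → ℝ) : Fin 3 → ℝ := ![x 0, x 1, 1 / 2]

lemma contractible_aux (S : Set (Fin 3 → ℝ)) (c : Fin 3 → ℝ) (hne : S.Nonempty)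
    (h1 : ∀ x ∈ S, ∀ t : ℝ, 0 ≤ t → t ≤ 1 → (1 - t) • x + t • pr x ∈ S)
    (h2 : ∀ x ∈ S, ∀ t : ℝ, 0 ≤ t → t ≤ 1 → (1 - t) • pr x + t • c ∈ S) :
    ContractibleSpace S := by
  have hpr : Continuous pr := by
    unfold pr
    refine continuous_pi fun i => ?_
    fin_cases i <;> simp <;> fun_prop
  have hprS : ∀ x ∈ S, pr x ∈ S := fun x hx => by simpa using h1 x hx 1 (by simp) le_rfl
  have hc : c ∈ S := by
    obtain ⟨x, hx⟩ := hne
    simpa using h2 x hx 1 (by simp) le_rfl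
  let P : C(S, S) := ⟨fun x => ⟨pr x, hprS x x.2⟩, by fun_prop⟩
  rw [contractible_iff_id_nullhomotopic]
  refine ⟨⟨c, hc⟩, ?_⟩
  have H1 : ContinuousMap.Homotopic (ContinuousMap.id S) P := by
    refine ⟨⟨⟨fun p => ⟨(1 - (p.1 : ℝ)) • (p.2 : Fin 3 → ℝ) + (p.1 : ℝ) • pr p.2,
      h1 _ p.2.2 _ p.1.2.1 p.1.2.2⟩, by fun_prop⟩, ?_, ?_⟩⟩
    · intro x; simp
    · intro x; simp [P]
  have H2 : ContinuousMap.Homotopic P (ContinuousMap.const S ⟨c, hc⟩) := by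
    refine ⟨⟨⟨fun p => ⟨(1 - (p.1 : ℝ)) • pr p.2 + (p.1 : ℝ) • c,
      h2 _ p.2.2 _ p.1.2.1 p.1.2.2⟩, by fun_prop⟩, ?_, ?_⟩⟩
    · intro x; simp [P]
    · intro x; simp
  exact H1.trans H2

lemma mem_closure_iff' {N : ℤ} {x : Fin 3 → ℝ} : x ∈ cubeClosure (Reg N) ↔
    ∃ i j k : ℤ, G N i j k ∧ (i ≤ x 0 ∧ x 0 ≤ i + 1) ∧ (j ≤ x 1 ∧ x 1 ≤ j + 1) ∧
      (k ≤ x 2 ∧ x 2 ≤ k + 1) := by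
  simp only [cubeClosure, Set.mem_iUnion, Set.mem_setOf_eq, exists_prop]
  constructor
  · rintro ⟨v, hv, h⟩
    exact ⟨v 0, v 1, v 2, hv, h 0, h 1, h 2⟩
  · rintro ⟨i, j, k, hG, h0, h1, h2⟩
    refine ⟨![i, j, k], hG, ?_⟩
    intro m
    fin_cases m
    · exact h0
    · exact h1
    · exact h2

lemma exists_cell {a b : ℤ} (hab : a ≤ b) {x : ℝ} (h1 : a ≤ x) (h2 : x ≤ b + 1) :
    ∃ i : ℤ, a ≤ i ∧ i ≤ b ∧ (i : ℝ) ≤ x ∧ x ≤ i + 1 := by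
  by_cases h : x < b + 1
  · refine ⟨⌊x⌋, Int.le_floor.2 h1, ?_, Int.floor_le x, (Int.lt_floor_add_one x).le⟩
    have : ⌊x⌋ < b + 1 := Int.floor_lt.2 (by push_cast; exact h)
    omega
  · exact ⟨b, hab, le_rfl, by linarith, h2⟩

lemma base_sub {N : ℤ} (hN : 1 ≤ N) {x : Fin 3 → ℝ} (h0 : 0 ≤ x 0) (h0' : x 0 ≤ 2 * N + 1)
    (h1 : -1 ≤ x 1) (h1' : x 1 ≤ 2) (h2 : 0 ≤ x 2) (h2' : x 2 ≤ 1) :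
    x ∈ cubeClosure (Reg N) := by
  obtain ⟨i, hi⟩ := exists_cell (a := 0) (b := 2 * N) (by omega) (x := x 0) (by simpa using h0)
    (by push_cast; exact h0')
  obtain ⟨j, hj⟩ := exists_cell (a := -1) (b := 1) (by omega) (x := x 1)
    (by push_cast; exact h1) (by push_cast; linarith)
  rw [mem_closure_iff']
  refine ⟨i, j, 0, by unfold G; omega, hi.2.2, hj.2.2, by simpa using h2, by simpa using h2'⟩

lemma closure_bound {N : ℤ} {x : Fin 3 → ℝ} (hx : x ∈ cubeClosure (Reg N)) :
    0 ≤ x 0 ∧ x 0 ≤ 2 * N + 1 ∧ -1 ≤ x 1 ∧ x 1 ≤ 2 := by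
  rw [mem_closure_iff'] at hx
  obtain ⟨i, j, k, hG, h0, h1, h2⟩ := hx
  obtain ⟨g1, g2, g3, g4, -⟩ := hG
  have g1' : (0 : ℝ) ≤ i := by exact_mod_cast g1
  have g2' : (i : ℝ) ≤ 2 * N := by exact_mod_cast g2
  have g3' : (-1 : ℝ) ≤ j := by exact_mod_cast g3
  have g4' : (j : ℝ) ≤ 1 := by exact_mod_cast g4
  refine ⟨?_, ?_, ?_, ?_⟩ <;> linarith [h0.1, h0.2, h1.1, h1.2]

lemma closure_flat {N : ℤ} {x : Fin 3 → ℝ} (hx : x ∈ cubeClosure (Reg N)) {t : ℝ}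
    (ht : 0 ≤ t) (ht' : t ≤ 1) : (1 - t) • x + t • pr x ∈ cubeClosure (Reg N) := by
  rw [mem_closure_iff'] at hx ⊢
  obtain ⟨i, j, k, hG, h0, h1, h2⟩ := hx
  have e0 : ((1 - t) • x + t • pr x) 0 = x 0 := by simp [pr]; ring
  have e1 : ((1 - t) • x + t • pr x) 1 = x 1 := by simp [pr]; ring
  have e2 : ((1 - t) • x + t • pr x) 2 = (1 - t) * x 2 + t * (1 / 2) := by simp [pr]
  rw [e0, e1, e2]
  have hG0 : G N i j 0 := by unfold G at *; omega
  have hk : k = 0 ∨ k = 1 ∨ k = -1 := by unfold G at hG; omega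
  rcases hk with rfl | rfl | rfl
  · refine ⟨i, j, 0, hG, h0, h1, ?_⟩
    push_cast at *
    constructor <;> nlinarith
  · push_cast at h2
    by_cases hz : 1 ≤ (1 - t) * x 2 + t * (1 / 2)
    · refine ⟨i, j, 1, hG, h0, h1, ?_⟩
      push_cast
      constructor <;> nlinarith
    · refine ⟨i, j, 0, hG0, h0, h1, ?_⟩
      push_cast
      constructor <;> nlinarith
  · push_cast at h2
    by_cases hz : (1 - t) * x 2 + t * (1 / 2) ≤ 0
    · refine ⟨i, j, -1, hG, h0, h1, ?_⟩
      push_cast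
      constructor <;> nlinarith
    · refine ⟨i, j, 0, hG0, h0, h1, ?_⟩
      push_cast
      constructor <;> nlinarith

/-- Center of the base. -/
noncomputable def cen (N : ℤ) : Fin 3 → ℝ := ![1 / 2, 1 / 2, 1 / 2]

lemma contractible_closure {N : ℤ} (hN : 1 ≤ N) : ContractibleSpace (cubeClosure (Reg N)) := by
  have hN' : (1 : ℝ) ≤ N := by exact_mod_cast hN
  refine contractible_aux _ (cen N) ⟨cen N, ?_⟩ (fun x hx t ht ht' => closure_flat hx ht ht') ?_
  · apply base_sub hN <;> simp [cen] <;> norm_num <;> linarith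
  · intro x hx t ht ht'
    obtain ⟨h1, h2, h3, h4⟩ := closure_bound hx
    apply base_sub hN <;> simp [cen, pr] <;> nlinarith

/-- The open base box. -/
def box (N : ℤ) : Set (Fin 3 → ℝ) :=
  {x | 0 < x 0 ∧ x 0 < 2 * N + 1 ∧ -1 < x 1 ∧ x 1 < 2 ∧ 0 < x 2 ∧ x 2 < 1}

lemma box_sub {N : ℤ} (hN : 1 ≤ N) : box N ⊆ interior (cubeClosure (Reg N)) := by
  apply interior_maximal
  · rintro x ⟨h1, h2, h3, h4, h5, h6⟩
    exact base_sub hN h1.le h2.le h3.le h4.le h5.le h6.le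
  · unfold box
    simp only [Set.setOf_and]
    refine (isOpen_lt (by fun_prop) (by fun_prop)).inter <|
      (isOpen_lt (by fun_prop) (by fun_prop)).inter <|
      (isOpen_lt (by fun_prop) (by fun_prop)).inter <|
      (isOpen_lt (by fun_prop) (by fun_prop)).inter <|
      (isOpen_lt (by fun_prop) (by fun_prop)).inter (isOpen_lt (by fun_prop) (by fun_prop))

lemma interior_bound {N : ℤ} {x : Fin 3 → ℝ} (hx : x ∈ interior (cubeClosure (Reg N))) :
    0 < x 0 ∧ x 0 < 2 * N + 1 ∧ -1 < x 1 ∧ x 1 < 2 := by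
  obtain ⟨e, he, hb⟩ := Metric.isOpen_iff.1 isOpen_interior x hx
  have key : ∀ (m : Fin 3) (d : ℝ), |d| < e →
      Function.update x m (x m + d) ∈ cubeClosure (Reg N) := by
    intro m d hd
    apply interior_subset
    apply hb
    rw [Metric.mem_ball, dist_pi_lt_iff he]
    intro l
    by_cases hl : l = m
    · subst hl
      simpa [Real.dist_eq] using hd
    · simp [hl, he]
  have hp : |e / 2| < e := by rw [abs_of_pos (by linarith)]; linarith
  have hm : |-(e / 2)| < e := by rw [abs_neg]; exact hp
  have a1 := (closure_bound (key 0 _ hp)).2.1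
  have a2 := (closure_bound (key 0 _ hm)).1
  have a3 := (closure_bound (key 1 _ hp)).2.2.2
  have a4 := (closure_bound (key 1 _ hm)).2.2.1
  simp only [Function.update_self] at a1 a2 a3 a4
  refine ⟨?_, ?_, ?_, ?_⟩ <;> linarith

lemma interior_flat {N : ℤ} (hN : 1 ≤ N) {x : Fin 3 → ℝ}
    (hx : x ∈ interior (cubeClosure (Reg N))) {t : ℝ}
    (ht : 0 ≤ t) (ht' : t ≤ 1) : (1 - t) • x + t • pr x ∈ interior (cubeClosure (Reg N)) := by
  obtain ⟨b1, b2, b3, b4⟩ := interior_bound hx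
  rcases ht'.lt_or_eq with hlt | rfl
  · have hne : 1 - t ≠ 0 := by linarith
    let q : (Fin 3 → ℝ) → (Fin 3 → ℝ) := fun y => ![y 0, y 1, (y 2 - t * (1 / 2)) / (1 - t)]
    have hq : Continuous q := by
      refine continuous_pi fun i => ?_
      fin_cases i <;> simp [q] <;> fun_prop
    rw [mem_interior]
    refine ⟨q ⁻¹' interior (cubeClosure (Reg N)), ?_, isOpen_interior.preimage hq, ?_⟩
    · intro y hy
      have h := closure_flat (interior_subset hy) ht ht'
      have e : (1 - t) • q y + t • pr (q y) = y := by
        ext m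
        fin_cases m
        · simp [q, pr]; ring
        · simp [q, pr]; ring
        · simp [q, pr]; field_simp; ring
      rwa [e] at h
    · have e : q ((1 - t) • x + t • pr x) = x := by
        ext m
        fin_cases m
        · show (1 - t) * x 0 + t * x 0 = x 0
          ring
        · show (1 - t) * x 1 + t * x 1 = x 1
          ring
        · show ((1 - t) * x 2 + t * (1 / 2) - t * (1 / 2)) / (1 - t) = x 2
          field_simp
          ring
      rw [Set.mem_preimage, e]
      exact hx
  · apply box_sub hN
    simp only [sub_self, zero_smul, one_smul, zero_add]
    refine ⟨b1, b2, b3, b4, ?_, ?_⟩ <;> simp [pr]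
    norm_num

lemma contractible_interior {N : ℤ} (hN : 1 ≤ N) :
    ContractibleSpace (interior (cubeClosure (Reg N))) := by
  have hN' : (1 : ℝ) ≤ N := by exact_mod_cast hN
  refine contractible_aux _ (cen N) ⟨cen N, ?_⟩
    (fun x hx t ht ht' => interior_flat hN hx ht ht') ?_
  · apply box_sub hN
    refine ⟨?_, ?_, ?_, ?_, ?_, ?_⟩ <;> simp [cen] <;> norm_num <;> linarith
  · intro x hx t ht ht'
    obtain ⟨h1, h2, h3, h4⟩ := interior_bound hx
    apply box_sub hN
    rcases ht'.lt_or_eq with hlt | rfl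
    · have hu : 0 < 1 - t := by linarith
      have p1 := mul_pos hu h1
      have p2 := mul_pos hu (sub_pos.2 h2)
      have p3 := mul_pos hu (sub_pos.2 h3)
      have p4 := mul_pos hu (sub_pos.2 h4)
      refine ⟨?_, ?_, ?_, ?_, ?_, ?_⟩ <;> simp [cen, pr] <;> nlinarith
    · refine ⟨?_, ?_, ?_, ?_, ?_, ?_⟩ <;> simp [cen, pr] <;> linarith

end DominoAux

/-- Domino tilings of contractible regions in `ℝ³` do not have the local move
property: for every `n` there is a contractible region with exactly two domino
tilings, and these differ in at least `n` tiles. -/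
theorem domino_no_local_move_property :
    ∀ n : ℕ, ∃ Γ : Set (Fin 3 → ℤ), IsContractibleRegion Γ ∧
      ∃ T₁ T₂ : Set (Set (Fin 3 → ℤ)), T₁ ≠ T₂ ∧
        IsTiling IsDomino Γ T₁ ∧ IsTiling IsDomino Γ T₂ ∧
        (∀ T, IsTiling IsDomino Γ T → T = T₁ ∨ T = T₂) ∧
        n ≤ (T₁ \ T₂).ncard := by
  intro n
  have hN : (1 : ℤ) ≤ (n : ℤ) + 1 := by omega
  refine ⟨DominoAux.Reg (n + 1), ⟨DominoAux.Reg_finite _, DominoAux.contractible_closure hN,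
    DominoAux.contractible_interior hN⟩, DominoAux.Til (n + 1) 1, DominoAux.Til (n + 1) (-1),
    ?_, DominoAux.Til_tiling hN (Or.inl rfl), DominoAux.Til_tiling hN (Or.inr rfl), ?_,
    DominoAux.diff_card n⟩
  · intro h
    have hG : DominoAux.G ((n : ℤ) + 1) 0 0 0 := by unfold DominoAux.G; omega
    have h1 := DominoAux.D_Til (s := 1) hG
    have h2 := DominoAux.D_Til (s := -1) hG
    rw [h] at h1
    have := DominoAux.D_unique (DominoAux.Til_tiling hN (Or.inr rfl)) h1 h2
    simp [DominoAux.f1] at this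
  · intro T hT
    rcases DominoAux.start hN hT with h | h
    · exact Or.inl (DominoAux.eq_Til hN hT (Or.inl rfl) h)
    · exact Or.inr (DominoAux.eq_Til hN hT (Or.inr rfl) h)
end

section
/- Slab tilings of contractible regions in ℝ³ do not have the local move property: for every n ∈ ℕ there exists a contractible region Γ ⊂ ℤ³ that has exactly two slab tilings T₁ ≠ T₂, and these two tilings differ in at least n tiles (|T₁ ∖ T₂| ≥ n). -/
namespace SlabTray

/-- slab in the `x z` plane -/
def X (a b c : ℤ) : Set (Fin 3 → ℤ) :=
  {v | (v 0 = a ∨ v 0 = a + 1) ∧ v 1 = b ∧ (v 2 = c ∨ v 2 = c + 1)}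

/-- slab in the `y z` plane -/
def Y (a b c : ℤ) : Set (Fin 3 → ℤ) :=
  {v | v 0 = a ∧ (v 1 = b ∨ v 1 = b + 1) ∧ (v 2 = c ∨ v 2 = c + 1)}

/-- slab in the `x y` plane -/
def Z (a b c : ℤ) : Set (Fin 3 → ℤ) :=
  {v | (v 0 = a ∨ v 0 = a + 1) ∧ (v 1 = b ∨ v 1 = b + 1) ∧ v 2 = c}

lemma mem_X {a b c : ℤ} {v} : v ∈ X a b c ↔
    (v 0 = a ∨ v 0 = a + 1) ∧ v 1 = b ∧ (v 2 = c ∨ v 2 = c + 1) := Iff.rfl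
lemma mem_Y {a b c : ℤ} {v} : v ∈ Y a b c ↔
    v 0 = a ∧ (v 1 = b ∨ v 1 = b + 1) ∧ (v 2 = c ∨ v 2 = c + 1) := Iff.rfl
lemma mem_Z {a b c : ℤ} {v} : v ∈ Z a b c ↔
    (v 0 = a ∨ v 0 = a + 1) ∧ (v 1 = b ∨ v 1 = b + 1) ∧ v 2 = c := Iff.rfl

lemma mem_slab (t : Fin 3 → ℤ) (σ : Equiv.Perm (Fin 3)) (w : Fin 3 → ℤ) :
    w ∈ (fun v : Fin 3 → ℤ => t + v ∘ ⇑σ) ''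
      {v | (v 0 = 0 ∨ v 0 = 1) ∧ (v 1 = 0 ∨ v 1 = 1) ∧ v 2 = 0} ↔
    ∀ j, w j = t j ∨ (j ≠ σ.symm 2 ∧ w j = t j + 1) := by
  constructor
  · rintro ⟨v, ⟨h0, h1, h2⟩, rfl⟩ j
    simp only [Pi.add_apply, Function.comp_apply]
    have hj : j = σ.symm (σ j) := by simp
    generalize σ j = i at *
    fin_cases i
    · have : j ≠ σ.symm 2 := by rw [hj]; simp
      simp only [Fin.zero_eta] at *
      rcases h0 with h | h <;> simp [h, this]
    · have : j ≠ σ.symm 2 := by rw [hj]; simp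
      simp only [Fin.mk_one] at *
      rcases h1 with h | h <;> simp [h, this]
    · left
      simpa using h2
  · intro h
    refine ⟨fun i => w (σ.symm i) - t (σ.symm i), ⟨?_, ?_, ?_⟩, ?_⟩
    · have := h (σ.symm 0)
      dsimp only
      omega
    · have := h (σ.symm 1)
      dsimp only
      omega
    · have := h (σ.symm 2)
      dsimp only
      simp at this
      omega
    · ext j
      simp

lemma isSlab_iff (s : Set (Fin 3 → ℤ)) :
    IsSlab s ↔ ∃ a b c, s = X a b c ∨ s = Y a b c ∨ s = Z a b c := by
  constructor
  · rintro ⟨t, σ, rfl⟩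
    refine ⟨t 0, t 1, t 2, ?_⟩
    have key := mem_slab t σ
    generalize σ.symm 2 = i at key
    fin_cases i
    · right; left
      ext w
      rw [key, mem_Y, Fin.forall_fin_succ, Fin.forall_fin_two]
      simp
    · left
      ext w
      rw [key, mem_X, Fin.forall_fin_succ, Fin.forall_fin_two]
      simp
    · right; right
      ext w
      rw [key, mem_Z, Fin.forall_fin_succ, Fin.forall_fin_two]
      simp
  · rintro ⟨a, b, c, rfl | rfl | rfl⟩
    · refine ⟨![a, b, c], Equiv.swap 1 2, ?_⟩
      ext w
      rw [mem_slab, mem_X, Fin.forall_fin_succ, Fin.forall_fin_two]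
      simp
    · refine ⟨![a, b, c], Equiv.swap 0 2, ?_⟩
      ext w
      rw [mem_slab, mem_Y, Fin.forall_fin_succ, Fin.forall_fin_two]
      simp
    · refine ⟨![a, b, c], Equiv.refl _, ?_⟩
      ext w
      rw [mem_slab, mem_Z, Fin.forall_fin_succ, Fin.forall_fin_two]
      simp

/-- The tray: a `4 × (2m+2)` floor with a rim of height one. -/
def G (m : ℤ) : Set (Fin 3 → ℤ) :=
  {v | 0 ≤ v 0 ∧ v 0 ≤ 3 ∧ 0 ≤ v 1 ∧ v 1 ≤ 2 * m + 1 ∧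
    (v 2 = 0 ∨ (v 2 = 1 ∧ (v 0 = 0 ∨ v 0 = 3 ∨ v 1 = 0 ∨ v 1 = 2 * m + 1)))}

lemma mem_G {m : ℤ} {v} : v ∈ G m ↔ 0 ≤ v 0 ∧ v 0 ≤ 3 ∧ 0 ≤ v 1 ∧ v 1 ≤ 2 * m + 1 ∧
    (v 2 = 0 ∨ (v 2 = 1 ∧ (v 0 = 0 ∨ v 0 = 3 ∨ v 1 = 0 ∨ v 1 = 2 * m + 1))) := Iff.rfl

lemma G_finite (m : ℤ) : (G m).Finite := by
  apply (Set.finite_Icc (![0, 0, 0] : Fin 3 → ℤ) ![3, 2 * m + 1, 1]).subset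
  intro v hv
  rw [mem_G] at hv
  rw [Set.mem_Icc, Pi.le_def, Pi.le_def, Fin.forall_fin_succ, Fin.forall_fin_two,
    Fin.forall_fin_succ, Fin.forall_fin_two]
  simp
  omega

/-- First tiling. -/
def T1 (m : ℤ) : Set (Set (Fin 3 → ℤ)) :=
  {s | (∃ k, 0 ≤ k ∧ k ≤ m ∧ s = Y 0 (2 * k) 0) ∨ (∃ k, 0 ≤ k ∧ k ≤ m ∧ s = Y 3 (2 * k) 0) ∨
    s = X 1 0 0 ∨ s = X 1 (2 * m + 1) 0 ∨ (∃ k, 0 ≤ k ∧ k < m ∧ s = Z 1 (2 * k + 1) 0)}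

/-- Second tiling. -/
def T2 (m : ℤ) : Set (Set (Fin 3 → ℤ)) :=
  {s | (∃ k, 0 ≤ k ∧ k < m ∧ s = Y 0 (2 * k + 1) 0) ∨
    (∃ k, 0 ≤ k ∧ k < m ∧ s = Y 3 (2 * k + 1) 0) ∨
    s = X 0 0 0 ∨ s = X 2 0 0 ∨ s = X 0 (2 * m + 1) 0 ∨ s = X 2 (2 * m + 1) 0 ∨
    (∃ k, 0 ≤ k ∧ k < m ∧ s = Z 1 (2 * k + 1) 0)}

lemma X_ne (a b c : ℤ) : (X a b c).Nonempty := ⟨![a, b, c], by simp [mem_X]⟩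
lemma Y_ne (a b c : ℤ) : (Y a b c).Nonempty := ⟨![a, b, c], by simp [mem_Y]⟩
lemma Z_ne (a b c : ℤ) : (Z a b c).Nonempty := ⟨![a, b, c], by simp [mem_Z]⟩
lemma X_slab (a b c : ℤ) : IsSlab (X a b c) := (isSlab_iff _).2 ⟨a, b, c, by simp⟩
lemma Y_slab (a b c : ℤ) : IsSlab (Y a b c) := (isSlab_iff _).2 ⟨a, b, c, by simp⟩
lemma Z_slab (a b c : ℤ) : IsSlab (Z a b c) := (isSlab_iff _).2 ⟨a, b, c, by simp⟩

lemma T1_tiling (m : ℤ) (hm : 1 ≤ m) : IsTiling IsSlab (G m) (T1 m) := by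
  refine ⟨?_, ?_, ?_⟩
  · rintro s (⟨k, -, -, rfl⟩ | ⟨k, -, -, rfl⟩ | rfl | rfl | ⟨k, -, -, rfl⟩) <;>
      simp [X_ne, Y_ne, Z_ne, X_slab, Y_slab, Z_slab]
  · intro s hs t ht hst
    rw [Function.onFun, Set.disjoint_left]
    intro v hv hv'
    apply hst
    simp only [id] at hv hv'
    rcases hs with ⟨k, h1, h2, rfl⟩ | ⟨k, h1, h2, rfl⟩ | rfl | rfl | ⟨k, h1, h2, rfl⟩ <;>
    rcases ht with ⟨l, h3, h4, rfl⟩ | ⟨l, h3, h4, rfl⟩ | rfl | rfl | ⟨l, h3, h4, rfl⟩ <;>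
    simp only [mem_X, mem_Y, mem_Z] at hv hv' <;>
    first
    | rfl
    | (exfalso; omega)
    | (have : k = l := by omega
       rw [this])
  · ext v
    rw [Set.mem_sUnion, mem_G]
    constructor
    · rintro ⟨s, ⟨k, h1, h2, rfl⟩ | ⟨k, h1, h2, rfl⟩ | rfl | rfl | ⟨k, h1, h2, rfl⟩, hv⟩ <;>
      simp only [mem_X, mem_Y, mem_Z] at hv <;> omega
    · intro h
      by_cases h0 : v 0 = 0
      · exact ⟨_, Or.inl ⟨v 1 / 2, by omega, by omega, rfl⟩, by rw [mem_Y]; omega⟩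
      by_cases h3 : v 0 = 3
      · exact ⟨_, Or.inr (Or.inl ⟨v 1 / 2, by omega, by omega, rfl⟩), by rw [mem_Y]; omega⟩
      by_cases h4 : v 1 = 0
      · exact ⟨_, Or.inr (Or.inr (Or.inl rfl)), by rw [mem_X]; omega⟩
      by_cases h5 : v 1 = 2 * m + 1
      · exact ⟨_, Or.inr (Or.inr (Or.inr (Or.inl rfl))), by rw [mem_X]; omega⟩
      exact ⟨_, Or.inr (Or.inr (Or.inr (Or.inr ⟨(v 1 - 1) / 2, by omega, by omega, rfl⟩))),
        by rw [mem_Z]; omega⟩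

lemma T2_tiling (m : ℤ) (hm : 1 ≤ m) : IsTiling IsSlab (G m) (T2 m) := by
  refine ⟨?_, ?_, ?_⟩
  · rintro s (⟨k, -, -, rfl⟩ | ⟨k, -, -, rfl⟩ | rfl | rfl | rfl | rfl | ⟨k, -, -, rfl⟩) <;>
      simp [X_ne, Y_ne, Z_ne, X_slab, Y_slab, Z_slab]
  · intro s hs t ht hst
    rw [Function.onFun, Set.disjoint_left]
    intro v hv hv'
    apply hst
    simp only [id] at hv hv'
    rcases hs with ⟨k, h1, h2, rfl⟩ | ⟨k, h1, h2, rfl⟩ | rfl | rfl | rfl | rfl |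
      ⟨k, h1, h2, rfl⟩ <;>
    rcases ht with ⟨l, h3, h4, rfl⟩ | ⟨l, h3, h4, rfl⟩ | rfl | rfl | rfl | rfl |
      ⟨l, h3, h4, rfl⟩ <;>
    simp only [mem_X, mem_Y, mem_Z] at hv hv' <;>
    first
    | rfl
    | (exfalso; omega)
    | (have : k = l := by omega
       rw [this])
  · ext v
    rw [Set.mem_sUnion, mem_G]
    constructor
    · rintro ⟨s, ⟨k, h1, h2, rfl⟩ | ⟨k, h1, h2, rfl⟩ | rfl | rfl | rfl | rfl |
        ⟨k, h1, h2, rfl⟩, hv⟩ <;>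
      simp only [mem_X, mem_Y, mem_Z] at hv <;> omega
    · intro h
      by_cases h4 : v 1 = 0
      · by_cases h0 : v 0 ≤ 1
        · exact ⟨_, Or.inr (Or.inr (Or.inl rfl)), by rw [mem_X]; omega⟩
        · exact ⟨_, Or.inr (Or.inr (Or.inr (Or.inl rfl))), by rw [mem_X]; omega⟩
      by_cases h5 : v 1 = 2 * m + 1
      · by_cases h0 : v 0 ≤ 1
        · exact ⟨_, Or.inr (Or.inr (Or.inr (Or.inr (Or.inl rfl)))), by rw [mem_X]; omega⟩
        · exact ⟨_, Or.inr (Or.inr (Or.inr (Or.inr (Or.inr (Or.inl rfl))))),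
            by rw [mem_X]; omega⟩
      by_cases h0 : v 0 = 0
      · exact ⟨_, Or.inl ⟨(v 1 - 1) / 2, by omega, by omega, rfl⟩, by rw [mem_Y]; omega⟩
      by_cases h3 : v 0 = 3
      · exact ⟨_, Or.inr (Or.inl ⟨(v 1 - 1) / 2, by omega, by omega, rfl⟩),
          by rw [mem_Y]; omega⟩
      exact ⟨_, Or.inr (Or.inr (Or.inr (Or.inr (Or.inr (Or.inr
        ⟨(v 1 - 1) / 2, by omega, by omega, rfl⟩))))), by rw [mem_Z]; omega⟩

lemma tiling_eq {α : Type*} {P : Set α → Prop} {Γ : Set α} {T T' : Set (Set α)}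
    (h : IsTiling P Γ T) (h' : IsTiling P Γ T') (hs : T' ⊆ T) : T = T' := by
  refine Set.Subset.antisymm (fun s hsT => ?_) hs
  obtain ⟨p, hp⟩ := (h.1 s hsT).2
  have hpΓ : p ∈ ⋃₀ T' := by
    rw [h'.2.2, ← h.2.2]
    exact ⟨s, hsT, hp⟩
  obtain ⟨t, ht, hpt⟩ := hpΓ
  have : s = t := by
    by_contra hne
    exact Set.disjoint_left.1 (h.2.1 hsT (hs ht) hne) hp hpt
  rwa [this]

section unique

variable {m : ℤ} {T : Set (Set (Fin 3 → ℤ))}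

lemma sub_G (h : IsTiling IsSlab (G m) T) {s} (hs : s ∈ T) (x y z : ℤ)
    (hv : ![x, y, z] ∈ s) : 0 ≤ x ∧ x ≤ 3 ∧ 0 ≤ y ∧ y ≤ 2 * m + 1 ∧
    (z = 0 ∨ (z = 1 ∧ (x = 0 ∨ x = 3 ∨ y = 0 ∨ y = 2 * m + 1))) := by
  have : ![x, y, z] ∈ G m := by rw [← h.2.2]; exact ⟨s, hs, hv⟩
  simpa [mem_G] using this

lemma disj (h : IsTiling IsSlab (G m) T) {s t} (hs : s ∈ T) (ht : t ∈ T) {v}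
    (hv : v ∈ s) (hv' : v ∈ t) : s = t := by
  by_contra hne
  exact Set.disjoint_left.1 (h.2.1 hs ht hne) hv hv'

/-- The cubes of the upper rim are covered by upright slabs. -/
lemma rim (hm : 1 ≤ m) (h : IsTiling IsSlab (G m) T) (x y : ℤ)
    (hx : 0 ≤ x ∧ x ≤ 3 ∧ 0 ≤ y ∧ y ≤ 2 * m + 1)
    (hr : x = 0 ∨ x = 3 ∨ y = 0 ∨ y = 2 * m + 1) :
    (X x y 0 ∈ T ∧ x + 1 ≤ 3 ∧ (y = 0 ∨ y = 2 * m + 1)) ∨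
    (X (x - 1) y 0 ∈ T ∧ 0 ≤ x - 1 ∧ (y = 0 ∨ y = 2 * m + 1)) ∨
    (Y x y 0 ∈ T ∧ y + 1 ≤ 2 * m + 1 ∧ (x = 0 ∨ x = 3)) ∨
    (Y x (y - 1) 0 ∈ T ∧ 0 ≤ y - 1 ∧ (x = 0 ∨ x = 3)) := by
  have hv : ![x, y, 1] ∈ ⋃₀ T := by
    rw [h.2.2]
    simp [mem_G]
    omega
  obtain ⟨s, hs, hvs⟩ := hv
  obtain ⟨a, b, c, rfl | rfl | rfl⟩ := (isSlab_iff s).1 (h.1 s hs).1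
  · have e1 := sub_G h hs a b c (by simp [mem_X])
    have e2 := sub_G h hs a b (c + 1) (by simp [mem_X])
    have e3 := sub_G h hs (a + 1) b (c + 1) (by simp [mem_X])
    simp [mem_X] at hvs
    obtain ⟨hxa, rfl, hc⟩ := hvs
    obtain rfl : c = 0 := by omega
    rcases hxa with rfl | rfl
    · exact Or.inl ⟨hs, by omega, by omega⟩
    · exact Or.inr (Or.inl ⟨by simpa using hs, by omega, by omega⟩)
  · have e1 := sub_G h hs a b c (by simp [mem_Y])
    have e2 := sub_G h hs a b (c + 1) (by simp [mem_Y])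
    have e3 := sub_G h hs a (b + 1) (c + 1) (by simp [mem_Y])
    simp [mem_Y] at hvs
    obtain ⟨rfl, hyb, hc⟩ := hvs
    obtain rfl : c = 0 := by omega
    rcases hyb with rfl | rfl
    · exact Or.inr (Or.inr (Or.inl ⟨hs, by omega, by omega⟩))
    · exact Or.inr (Or.inr (Or.inr ⟨by simpa using hs, by omega, by omega⟩))
  · exfalso
    have e1 := sub_G h hs a b c (by simp [mem_Z])
    have e2 := sub_G h hs a (b + 1) c (by simp [mem_Z])
    have e3 := sub_G h hs (a + 1) b c (by simp [mem_Z])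
    have e4 := sub_G h hs (a + 1) (b + 1) c (by simp [mem_Z])
    simp [mem_Z] at hvs
    omega

/-- A tile that meets the lower rim reaches the upper rim. -/
lemma rim_up (hm : 1 ≤ m) (h : IsTiling IsSlab (G m) T) (x y : ℤ)
    (hx : 0 ≤ x ∧ x ≤ 3 ∧ 0 ≤ y ∧ y ≤ 2 * m + 1)
    (hr : x = 0 ∨ x = 3 ∨ y = 0 ∨ y = 2 * m + 1) {s} (hs : s ∈ T)
    (hv : ![x, y, 0] ∈ s) : ![x, y, 1] ∈ s := by
  rcases rim hm h x y hx hr with ⟨h1, -⟩ | ⟨h1, -⟩ | ⟨h1, -⟩ | ⟨h1, -⟩ <;>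
  · rw [disj h hs h1 hv (by simp [mem_X, mem_Y])]
    simp [mem_X, mem_Y]

/-- The floor is tiled in a unique way. -/
lemma floor (hm : 1 ≤ m) (h : IsTiling IsSlab (G m) T) (k : ℕ) (hk : (k : ℤ) < m) :
    Z 1 (2 * k + 1) 0 ∈ T := by
  induction k with
  | zero =>
    have hv : ![1, 1, 0] ∈ ⋃₀ T := by
      rw [h.2.2]
      simp [mem_G]
      omega
    obtain ⟨s, hs, hvs⟩ := hv
    obtain ⟨a, b, c, rfl | rfl | rfl⟩ := (isSlab_iff s).1 (h.1 s hs).1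
    · exfalso
      simp [mem_X] at hvs
      have e1 := sub_G h hs 1 b c (by simp [mem_X]; omega)
      have e2 := sub_G h hs 1 b (c + 1) (by simp [mem_X]; omega)
      omega
    · exfalso
      simp [mem_Y] at hvs
      have e1 := sub_G h hs a 1 c (by simp [mem_Y]; omega)
      have e2 := sub_G h hs a 1 (c + 1) (by simp [mem_Y]; omega)
      omega
    · simp [mem_Z] at hvs
      obtain ⟨ha, hb, rfl⟩ := hvs
      have e1 : a = 1 := by
        by_contra hne
        have := rim_up hm h 0 1 (by omega) (by omega) hs (by simp [mem_Z]; omega)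
        simp [mem_Z] at this
      have e2 : b = 1 := by
        by_contra hne
        have := rim_up hm h 1 0 (by omega) (by omega) hs (by simp [mem_Z]; omega)
        simp [mem_Z] at this
      subst e1 e2
      simpa using hs
  | succ k ih =>
    push_cast at hk ⊢
    have ih := ih (by omega)
    have hv : ![1, 2 * (k : ℤ) + 3, 0] ∈ ⋃₀ T := by
      rw [h.2.2]
      simp [mem_G]
      omega
    obtain ⟨s, hs, hvs⟩ := hv
    obtain ⟨a, b, c, rfl | rfl | rfl⟩ := (isSlab_iff s).1 (h.1 s hs).1
    · exfalso
      simp [mem_X] at hvs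
      have e1 := sub_G h hs 1 b c (by simp [mem_X]; omega)
      have e2 := sub_G h hs 1 b (c + 1) (by simp [mem_X]; omega)
      omega
    · exfalso
      simp [mem_Y] at hvs
      have e1 := sub_G h hs a (2 * k + 3) c (by simp [mem_Y]; omega)
      have e2 := sub_G h hs a (2 * k + 3) (c + 1) (by simp [mem_Y]; omega)
      omega
    · simp [mem_Z] at hvs
      obtain ⟨ha, hb, rfl⟩ := hvs
      have e1 : a = 1 := by
        by_contra hne
        have := rim_up hm h 0 (2 * k + 3) (by omega) (by omega) hs (by simp [mem_Z]; omega)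
        simp [mem_Z] at this
      have e2 : b = 2 * k + 3 := by
        by_contra hne
        have e := disj h hs ih (v := ![1, 2 * k + 2, 0]) (by simp [mem_Z]; omega)
          (by simp [mem_Z]; omega)
        have : ![1, 2 * (k : ℤ) + 3, 0] ∈ Z a b 0 := by simp [mem_Z]; omega
        rw [e] at this
        simp [mem_Z] at this
        omega
      subst e1 e2
      convert hs using 2
      ring

/-- Two tiles of `T` sharing a cube agree at every other cube. -/
lemma clash (h : IsTiling IsSlab (G m) T) {s t} (hs : s ∈ T) (ht : t ∈ T) (v w : Fin 3 → ℤ)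
    (hv : v ∈ s) (hv' : v ∈ t) (hw : w ∈ s) (hw' : w ∉ t) : False :=
  hw' (disj h hs ht hv hv' ▸ hw)

lemma sideA (hm : 1 ≤ m) (h : IsTiling IsSlab (G m) T) (x : ℤ) (hx : x = 0 ∨ x = 3)
    (h0 : Y x 0 0 ∈ T) (k : ℕ) (hk : (k : ℤ) ≤ m) : Y x (2 * k) 0 ∈ T := by
  induction k with
  | zero => simpa using h0
  | succ k ih =>
    push_cast at hk ⊢
    have ih := ih (by omega)
    rcases rim hm h x (2 * (k + 1)) (by omega) (by omega) with
      ⟨h1, h2⟩ | ⟨h1, h2⟩ | ⟨h1, h2⟩ | ⟨h1, h2⟩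
    · omega
    · omega
    · exact h1
    · exfalso
      exact clash h h1 ih ![x, 2 * k + 1, 0] ![x, 2 * k + 2, 0] (by simp [mem_Y]; omega)
        (by simp [mem_Y]) (by simp [mem_Y]; omega) (by simp [mem_Y])

lemma sideB (hm : 1 ≤ m) (h : IsTiling IsSlab (G m) T) (x x' : ℤ)
    (hx : (x = 0 ∧ x' = 0) ∨ (x = 3 ∧ x' = 2))
    (h0 : X x' 0 0 ∈ T) (k : ℕ) (hk : (k : ℤ) < m) : Y x (2 * k + 1) 0 ∈ T := by
  induction k with
  | zero =>
    rcases rim hm h x 1 (by omega) (by omega) with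
      ⟨h1, h2⟩ | ⟨h1, h2⟩ | ⟨h1, h2⟩ | ⟨h1, h2⟩
    · omega
    · omega
    · simpa using h1
    · exfalso
      exact clash h h1 h0 ![x, 0, 0] ![x, 1, 0] (by simp [mem_Y])
        (by simp [mem_X]; omega) (by simp [mem_Y]) (by simp [mem_X])
  | succ k ih =>
    push_cast at hk ⊢
    have ih := ih (by omega)
    rcases rim hm h x (2 * (k + 1) + 1) (by omega) (by omega) with
      ⟨h1, h2⟩ | ⟨h1, h2⟩ | ⟨h1, h2⟩ | ⟨h1, h2⟩
    · omega
    · omega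
    · exact h1
    · exfalso
      exact clash h h1 ih ![x, 2 * k + 2, 0] ![x, 2 * k + 3, 0] (by simp [mem_Y]; omega)
        (by simp [mem_Y]; omega) (by simp [mem_Y]; omega) (by simp [mem_Y]; omega)

lemma caseA (hm : 1 ≤ m) (h : IsTiling IsSlab (G m) T) (h0 : Y 0 0 0 ∈ T) : T1 m ⊆ T := by
  have hA := sideA hm h 0 (by omega) h0
  have hX : X 1 0 0 ∈ T := by
    rcases rim hm h 1 0 (by omega) (by omega) with
      ⟨h1, h2⟩ | ⟨h1, h2⟩ | ⟨h1, h2⟩ | ⟨h1, h2⟩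
    · exact h1
    · exfalso
      exact clash h h1 h0 ![0, 0, 0] ![1, 0, 0] (by simp [mem_X]) (by simp [mem_Y])
        (by simp [mem_X]) (by simp [mem_Y])
    · omega
    · omega
  have hX' : X 1 (2 * m + 1) 0 ∈ T := by
    have hl := hA m.toNat (by omega)
    rw [Int.toNat_of_nonneg (by omega)] at hl
    rcases rim hm h 1 (2 * m + 1) (by omega) (by omega) with
      ⟨h1, h2⟩ | ⟨h1, h2⟩ | ⟨h1, h2⟩ | ⟨h1, h2⟩
    · exact h1
    · exfalso
      exact clash h h1 hl ![0, 2 * m + 1, 0] ![1, 2 * m + 1, 0] (by simp [mem_X])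
        (by simp [mem_Y]) (by simp [mem_X]) (by simp [mem_Y])
    · omega
    · omega
  have hY3 : Y 3 0 0 ∈ T := by
    rcases rim hm h 3 0 (by omega) (by omega) with
      ⟨h1, h2⟩ | ⟨h1, h2⟩ | ⟨h1, h2⟩ | ⟨h1, h2⟩
    · omega
    · exfalso
      exact clash h h1 hX ![2, 0, 0] ![3, 0, 0] (by simp [mem_X]) (by simp [mem_X])
        (by simp [mem_X]) (by simp [mem_X])
    · exact h1
    · omega
  have hB := sideA hm h 3 (by omega) hY3
  rintro s (⟨k, h1, h2, rfl⟩ | ⟨k, h1, h2, rfl⟩ | rfl | rfl | ⟨k, h1, h2, rfl⟩)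
  · lift k to ℕ using h1
    exact hA k h2
  · lift k to ℕ using h1
    exact hB k h2
  · exact hX
  · exact hX'
  · lift k to ℕ using h1
    exact floor hm h k h2

lemma caseB (hm : 1 ≤ m) (h : IsTiling IsSlab (G m) T) (h0 : X 0 0 0 ∈ T) : T2 m ⊆ T := by
  have hA := sideB hm h 0 0 (by omega) h0
  have hX : X 2 0 0 ∈ T := by
    rcases rim hm h 2 0 (by omega) (by omega) with
      ⟨h1, h2⟩ | ⟨h1, h2⟩ | ⟨h1, h2⟩ | ⟨h1, h2⟩
    · exact h1
    · exfalso
      exact clash h h1 h0 ![1, 0, 0] ![2, 0, 0] (by simp [mem_X]) (by simp [mem_X])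
        (by simp [mem_X]) (by simp [mem_X])
    · omega
    · omega
  have hB := sideB hm h 3 2 (by omega) hX
  have hX0 : X 0 (2 * m + 1) 0 ∈ T := by
    have hl := hA (m - 1).toNat (by omega)
    rw [Int.toNat_of_nonneg (by omega)] at hl
    rcases rim hm h 0 (2 * m + 1) (by omega) (by omega) with
      ⟨h1, h2⟩ | ⟨h1, h2⟩ | ⟨h1, h2⟩ | ⟨h1, h2⟩
    · exact h1
    · omega
    · omega
    · exfalso
      exact clash h h1 hl ![0, 2 * m, 0] ![0, 2 * m + 1, 0] (by simp [mem_Y])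
        (by simp [mem_Y]; omega) (by simp [mem_Y]) (by simp [mem_Y]; omega)
  have hX2 : X 2 (2 * m + 1) 0 ∈ T := by
    rcases rim hm h 2 (2 * m + 1) (by omega) (by omega) with
      ⟨h1, h2⟩ | ⟨h1, h2⟩ | ⟨h1, h2⟩ | ⟨h1, h2⟩
    · exact h1
    · exfalso
      exact clash h h1 hX0 ![1, 2 * m + 1, 0] ![2, 2 * m + 1, 0] (by simp [mem_X])
        (by simp [mem_X]) (by simp [mem_X]) (by simp [mem_X])
    · omega
    · omega
  rintro s (⟨k, h1, h2, rfl⟩ | ⟨k, h1, h2, rfl⟩ | rfl | rfl | rfl | rfl | ⟨k, h1, h2, rfl⟩)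
  · lift k to ℕ using h1
    exact hA k h2
  · lift k to ℕ using h1
    exact hB k h2
  · exact h0
  · exact hX
  · exact hX0
  · exact hX2
  · lift k to ℕ using h1
    exact floor hm h k h2

lemma unique (hm : 1 ≤ m) (h : IsTiling IsSlab (G m) T) : T = T1 m ∨ T = T2 m := by
  rcases rim hm h 0 0 (by omega) (by omega) with ⟨h1, h2⟩ | ⟨h1, h2⟩ | ⟨h1, h2⟩ | ⟨h1, h2⟩
  · exact Or.inr (tiling_eq h (T2_tiling m hm) (caseB hm h h1))
  · omega
  · exact Or.inl (tiling_eq h (T1_tiling m hm) (caseA hm h h1))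
  · omega

end unique

lemma Y_notMem (m k : ℤ) : Y 0 (2 * k) 0 ∉ T2 m := by
  intro h
  have e1 : ![0, 2 * k, 0] ∈ Y 0 (2 * k) 0 := by simp [mem_Y]
  have e2 : ![0, 2 * k + 1, 0] ∈ Y 0 (2 * k) 0 := by simp [mem_Y]
  rcases h with ⟨l, h3, h4, h⟩ | ⟨l, h3, h4, h⟩ | h | h | h | h | ⟨l, h3, h4, h⟩ <;>
  · rw [h] at e1 e2
    simp [mem_X, mem_Y, mem_Z] at e1 e2 <;> omega

lemma card_diff (n : ℕ) : n ≤ (T1 (n + 1) \ T2 (n + 1)).ncard := by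
  have hfin : (T1 (n + 1) \ T2 (n + 1)).Finite := by
    apply ((G_finite (n + 1)).finite_subsets).subset
    intro s hs v hv
    rw [← (T1_tiling (n + 1) (by omega)).2.2]
    exact ⟨s, hs.1, hv⟩
  have hinj : Function.Injective (fun k : ℕ => Y 0 (2 * (k : ℤ)) 0) := by
    intro k l hkl
    dsimp only at hkl
    have e1 : ![0, 2 * (k : ℤ), 0] ∈ Y 0 (2 * k) 0 := by simp [mem_Y]
    have e2 : ![0, 2 * (k : ℤ) + 1, 0] ∈ Y 0 (2 * k) 0 := by simp [mem_Y]
    rw [hkl] at e1 e2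
    simp [mem_Y] at e1 e2
    omega
  calc n = ((fun k : ℕ => Y 0 (2 * (k : ℤ)) 0) '' (Set.Iio n)).ncard := by
        rw [Set.ncard_image_of_injective _ hinj]
        simp
    _ ≤ _ := by
        apply Set.ncard_le_ncard _ hfin
        rintro _ ⟨k, hk, rfl⟩
        simp at hk
        exact ⟨Or.inl ⟨k, by omega, by omega, rfl⟩, Y_notMem _ _⟩

/-! ### Contractibility -/

/-- scale the last coordinate -/
def D (s : ℝ) (p : Fin 3 → ℝ) : Fin 3 → ℝ := ![p 0, p 1, s * p 2]

lemma D_cont : Continuous (fun q : ℝ × (Fin 3 → ℝ) => D q.1 q.2) := by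
  unfold D
  refine continuous_pi fun i => ?_
  fin_cases i <;> simp <;> fun_prop

lemma D_one (p : Fin 3 → ℝ) : D 1 p = p := by
  ext i
  fin_cases i <;> simp [D]

lemma D_D (s t : ℝ) (p : Fin 3 → ℝ) : D s (D t p) = D (s * t) p := by
  ext i
  fin_cases i <;> simp [D, mul_assoc]

/-- scaling as a homeomorphism -/
noncomputable def Dh (s : ℝ) (hs : s ≠ 0) : (Fin 3 → ℝ) ≃ₜ (Fin 3 → ℝ) where
  toFun := D s
  invFun := D s⁻¹
  left_inv p := by rw [D_D, inv_mul_cancel₀ hs, D_one]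
  right_inv p := by rw [D_D, mul_inv_cancel₀ hs, D_one]
  continuous_toFun := D_cont.comp (Continuous.prodMk_right s)
  continuous_invFun := D_cont.comp (Continuous.prodMk_right s⁻¹)

lemma contr (S B : Set (Fin 3 → ℝ)) (hB : Convex ℝ B) (hne : B.Nonempty) (hBS : B ⊆ S)
    (hS : ∀ s : ℝ, 1 / 2 ≤ s → s ≤ 1 → ∀ p ∈ S, D s p ∈ S)
    (hSB : ∀ p ∈ S, D (1 / 2) p ∈ B) : ContractibleSpace S := by
  obtain ⟨q, hq⟩ := hne
  rw [contractible_iff_id_nullhomotopic]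
  refine ⟨⟨q, hBS hq⟩, ?_⟩
  let φ : C(S, S) := ⟨fun p => ⟨D (1 / 2) p, hBS (hSB p p.2)⟩, by
    apply Continuous.subtype_mk
    exact D_cont.comp (by fun_prop : Continuous fun p : S => ((1 / 2 : ℝ), (p : Fin 3 → ℝ)))⟩
  have H1 : ContinuousMap.Homotopic (ContinuousMap.id S) φ := by
    refine ⟨⟨⟨fun tp => ⟨D (1 - tp.1 / 2) tp.2, hS _ ?_ ?_ _ tp.2.2⟩, ?_⟩, ?_, ?_⟩⟩
    · have := tp.1.2.2
      linarith
    · have := tp.1.2.1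
      linarith
    · apply Continuous.subtype_mk
      exact D_cont.comp (by fun_prop : Continuous fun tp : unitInterval × S =>
        ((1 - (tp.1 : ℝ) / 2 : ℝ), (tp.2 : Fin 3 → ℝ)))
    · intro p
      apply Subtype.ext
      simp [D_one]
    · intro p
      apply Subtype.ext
      simp only [φ, ContinuousMap.coe_mk, Set.Icc.coe_one]
      norm_num
  have H2 : ContinuousMap.Homotopic φ (ContinuousMap.const S ⟨q, hBS hq⟩) := by
    refine ⟨⟨⟨fun tp => ⟨(1 - (tp.1 : ℝ)) • D (1 / 2) tp.2 + (tp.1 : ℝ) • q,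
      hBS (hB (hSB _ tp.2.2) hq ?_ ?_ ?_)⟩, ?_⟩, ?_, ?_⟩⟩
    · have := tp.1.2.2
      linarith
    · exact tp.1.2.1
    · ring
    · apply Continuous.subtype_mk
      have : Continuous fun tp : unitInterval × S => D (1 / 2) tp.2 :=
        D_cont.comp (by fun_prop : Continuous fun tp : unitInterval × S =>
          ((1 / 2 : ℝ), (tp.2 : Fin 3 → ℝ)))
      fun_prop
    · intro p
      apply Subtype.ext
      simp [φ]
    · intro p
      apply Subtype.ext
      simp
  exact H1.trans H2

lemma contr_interior (S B : Set (Fin 3 → ℝ)) (hB : Convex ℝ B) (hne : (interior B).Nonempty)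
    (hBS : B ⊆ S) (hS : ∀ s : ℝ, 1 / 2 ≤ s → s ≤ 1 → ∀ p ∈ S, D s p ∈ S)
    (hSB : ∀ p ∈ S, D (1 / 2) p ∈ B) : ContractibleSpace (interior S) := by
  have key : ∀ s : ℝ, 1 / 2 ≤ s → ∀ A : Set (Fin 3 → ℝ), (∀ p ∈ S, D s p ∈ A) →
      ∀ p ∈ interior S, D s p ∈ interior A := by
    intro s hs A hA p hp
    have hs0 : s ≠ 0 := by linarith
    have h1 : Dh s hs0 '' interior S ⊆ interior A := by
      apply interior_maximal
      · rintro _ ⟨p, hp, rfl⟩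
        exact hA p (interior_subset hp)
      · exact (Dh s hs0).isOpenMap _ isOpen_interior
    exact h1 ⟨p, hp, rfl⟩
  exact contr _ (interior B) hB.interior hne (interior_mono hBS)
    (fun s h1 h2 => key s h1 S (hS s h1 h2)) (key _ le_rfl B hSB)

lemma exists_cell (k : ℤ) (hk : 0 ≤ k) (x : ℝ) (h0 : 0 ≤ x) (h1 : x ≤ k + 1) :
    ∃ a : ℤ, 0 ≤ a ∧ a ≤ k ∧ (a : ℝ) ≤ x ∧ x ≤ a + 1 := by
  by_cases h : x ≤ k
  · refine ⟨⌊x⌋, Int.floor_nonneg.2 h0, ?_, Int.floor_le x, (Int.lt_floor_add_one x).le⟩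
    have : (⌊x⌋ : ℝ) ≤ k := (Int.floor_le x).trans h
    exact_mod_cast this
  · exact ⟨k, hk, le_rfl, by linarith, h1⟩

lemma contractible (m : ℤ) (hm : 1 ≤ m) : IsContractibleRegion (G m) := by
  let B : Set (Fin 3 → ℝ) := Set.Icc ![0, 0, 0] ![4, 2 * m + 2, 1]
  have memB : ∀ p, p ∈ B ↔ (0 ≤ p 0 ∧ 0 ≤ p 1 ∧ 0 ≤ p 2) ∧
      (p 0 ≤ 4 ∧ p 1 ≤ 2 * m + 2 ∧ p 2 ≤ 1) := by
    intro p
    simp only [B]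
    rw [Set.mem_Icc, Pi.le_def, Pi.le_def, Fin.forall_fin_succ, Fin.forall_fin_two,
      Fin.forall_fin_succ, Fin.forall_fin_two]
    simp
  have memS : ∀ p, p ∈ cubeClosure (G m) ↔ ∃ v ∈ G m, ((v 0 : ℝ) ≤ p 0 ∧ p 0 ≤ v 0 + 1) ∧
      ((v 1 : ℝ) ≤ p 1 ∧ p 1 ≤ v 1 + 1) ∧ ((v 2 : ℝ) ≤ p 2 ∧ p 2 ≤ v 2 + 1) := by
    intro p
    unfold cubeClosure
    simp only [Set.mem_iUnion, Set.mem_ofPred_eq, exists_prop]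
    simp only [Fin.forall_fin_succ (n := 2), Fin.forall_fin_two]
    rfl
  have hmR : (1 : ℝ) ≤ m := by exact_mod_cast hm
  have hB : Convex ℝ B := convex_Icc _ _
  have hne : (interior B).Nonempty := by
    refine ⟨fun _ => 1 / 2, ?_⟩
    rw [mem_interior]
    refine ⟨Set.pi Set.univ fun _ => Set.Ioo 0 1, ?_,
      isOpen_set_pi Set.finite_univ fun _ _ => isOpen_Ioo, ?_⟩
    · intro p hp
      have h0 := hp 0 trivial
      have h1 := hp 1 trivial
      have h2 := hp 2 trivial
      rw [Set.mem_Ioo] at h0 h1 h2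
      rw [memB]
      refine ⟨⟨?_, ?_, ?_⟩, ?_, ?_, ?_⟩ <;> linarith
    · intro i _
      norm_num
  have hBS : B ⊆ cubeClosure (G m) := by
    intro p hp
    rw [memB] at hp
    obtain ⟨⟨h0, h1, h2⟩, h3, h4, h5⟩ := hp
    obtain ⟨a, ha⟩ := exists_cell 3 (by norm_num) (p 0) h0 (by norm_num; exact h3)
    obtain ⟨b, hb⟩ := exists_cell (2 * m + 1) (by omega) (p 1) h1 (by push_cast; linarith)
    rw [memS]
    refine ⟨![a, b, 0], ?_, ?_⟩
    · simp [mem_G]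
      omega
    · simp
      exact ⟨ha.2.2, hb.2.2, h2, h5⟩
  have hS : ∀ s : ℝ, 1 / 2 ≤ s → s ≤ 1 → ∀ p ∈ cubeClosure (G m),
      D s p ∈ cubeClosure (G m) := by
    intro s h1 h2 p hp
    rw [memS] at hp ⊢
    obtain ⟨v, hv, e0, e1, e2⟩ := hp
    rw [mem_G] at hv
    have hD0 : D s p 0 = p 0 := rfl
    have hD1 : D s p 1 = p 1 := rfl
    have hD2 : D s p 2 = s * p 2 := rfl
    rw [hD0, hD1, hD2]
    have hz : (0 : ℝ) ≤ v 2 := by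
      have : 0 ≤ v 2 := by omega
      exact_mod_cast this
    have hp2 : 0 ≤ p 2 := by linarith
    have hs2 : s * p 2 ≤ p 2 := by nlinarith
    have hs0 : 0 ≤ s * p 2 := by nlinarith
    by_cases hc : s * p 2 ≤ 1
    · refine ⟨![v 0, v 1, 0], ?_, e0, e1, ?_, ?_⟩
      · simp [mem_G]
        omega
      · simpa using hs0
      · simpa using hc
    · refine ⟨v, hv, e0, e1, ?_, by linarith⟩
      have : v 2 ≤ 1 := by omega
      have : (v 2 : ℝ) ≤ 1 := by exact_mod_cast this
      linarith
  have hSB : ∀ p ∈ cubeClosure (G m), D (1 / 2) p ∈ B := by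
    intro p hp
    rw [memS] at hp
    obtain ⟨v, hv, e0, e1, e2⟩ := hp
    rw [mem_G] at hv
    rw [memB]
    have hD0 : D (1 / 2) p 0 = p 0 := rfl
    have hD1 : D (1 / 2) p 1 = p 1 := rfl
    have hD2 : D (1 / 2) p 2 = 1 / 2 * p 2 := rfl
    rw [hD0, hD1, hD2]
    have f0 : (0 : ℝ) ≤ v 0 := by exact_mod_cast hv.1
    have f1 : (v 0 : ℝ) ≤ 3 := by exact_mod_cast hv.2.1
    have f2 : (0 : ℝ) ≤ v 1 := by exact_mod_cast hv.2.2.1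
    have f3 : (v 1 : ℝ) ≤ 2 * m + 1 := by exact_mod_cast hv.2.2.2.1
    have f4 : (0 : ℝ) ≤ v 2 := by
      have : 0 ≤ v 2 := by omega
      exact_mod_cast this
    have f5 : (v 2 : ℝ) ≤ 1 := by
      have : v 2 ≤ 1 := by omega
      exact_mod_cast this
    refine ⟨⟨?_, ?_, ?_⟩, ?_, ?_, ?_⟩ <;> linarith
  exact ⟨G_finite m, contr _ B hB (hne.mono interior_subset) hBS hS hSB,
    contr_interior _ B hB hne hBS hS hSB⟩

end SlabTray

/-- Slab tilings of contractible regions in `ℝ³` do not have the local move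
property: for every `n` there is a contractible region with exactly two slab
tilings, and these differ in at least `n` tiles. -/
theorem slab_no_local_move_property :
    ∀ n : ℕ, ∃ Γ : Set (Fin 3 → ℤ), IsContractibleRegion Γ ∧
      ∃ T₁ T₂ : Set (Set (Fin 3 → ℤ)), T₁ ≠ T₂ ∧
        IsTiling IsSlab Γ T₁ ∧ IsTiling IsSlab Γ T₂ ∧
        (∀ T, IsTiling IsSlab Γ T → T = T₁ ∨ T = T₂) ∧
        n ≤ (T₁ \ T₂).ncard := by
  intro n
  have hm : (1 : ℤ) ≤ n + 1 := by omega
  refine ⟨SlabTray.G (n + 1), SlabTray.contractible _ hm, SlabTray.T1 (n + 1),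
    SlabTray.T2 (n + 1), ?_, SlabTray.T1_tiling _ hm, SlabTray.T2_tiling _ hm,
    fun T hT => SlabTray.unique hm hT, SlabTray.card_diff n⟩
  intro h
  have h0 := SlabTray.Y_notMem (n + 1) 0
  rw [← h] at h0
  exact h0 (Or.inl ⟨0, by omega, by omega, rfl⟩)
end

section
/- Let R, H ⊂ ℤ² be finite disjoint sets, and define the region Γ ⊂ ℤ³ by Γ = {(x,y,0) : (x,y) ∈ R ∪ H} ∪ {(x,y,1),(x,y,2) : (x,y) ∈ H, x+y even} ∪ {(x,y,−1),(x,y,−2) : (x,y) ∈ H, x+y odd}. Then Γ admits a tiling by copies of the 3×1×1 tromino if and only if R admits a tiling by 3×1 and 1×3 bars; moreover the tromino tilings of Γ are in bijection with the bar tilings of R. -/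
/-- A `3 × 1 × 1` tromino in `ℤ³`: three collinear cubes `{c, c+e, c+2e}` for a
standard basis vector `e`. -/
def IsTromino (s : Set (Fin 3 → ℤ)) : Prop :=
  ∃ (c : Fin 3 → ℤ) (i : Fin 3),
    s = {c, c + Pi.single i 1, c + Pi.single i 1 + Pi.single i 1}

/-- A `3 × 1` or `1 × 3` bar in `ℤ²`: three collinear cells `{p, p+u, p+2u}` for a
standard basis vector `u`. -/
def IsBar (s : Set (ℤ × ℤ)) : Prop :=
  ∃ (p : ℤ × ℤ) (u : ℤ × ℤ), (u = (1, 0) ∨ u = (0, 1)) ∧ s = {p, p + u, p + u + u}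

def trIota (p : ℤ × ℤ) : Fin 3 → ℤ := ![p.1, p.2, 0]

def trTower (p : ℤ × ℤ) : Set (Fin 3 → ℤ) :=
  {x | x 0 = p.1 ∧ x 1 = p.2 ∧ ((Even (p.1 + p.2) ∧ (x 2 = 0 ∨ x 2 = 1 ∨ x 2 = 2)) ∨
    (Odd (p.1 + p.2) ∧ (x 2 = 0 ∨ x 2 = -1 ∨ x 2 = -2)))}

def trGamma (R H : Set (ℤ × ℤ)) : Set (Fin 3 → ℤ) :=
  {x | ∃ p ∈ R ∪ H, x = ![p.1, p.2, 0]} ∪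
      {x | ∃ p ∈ H, Even (p.1 + p.2) ∧ (x = ![p.1, p.2, 1] ∨ x = ![p.1, p.2, 2])} ∪
      {x | ∃ p ∈ H, Odd (p.1 + p.2) ∧ (x = ![p.1, p.2, -1] ∨ x = ![p.1, p.2, -2])}

theorem vec_eq_iff (x : Fin 3 → ℤ) (a b c : ℤ) :
    x = ![a, b, c] ↔ x 0 = a ∧ x 1 = b ∧ x 2 = c := by
  constructor
  · rintro rfl; simp
  · rintro ⟨rfl, rfl, rfl⟩; ext i; fin_cases i <;> rfl

theorem trIota_inj : Function.Injective trIota := by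
  intro p q h
  have h0 := congrFun h 0
  have h1 := congrFun h 1
  simp [trIota] at h0 h1
  exact Prod.ext h0 h1

theorem mem_trGamma (R H : Set (ℤ × ℤ)) (x : Fin 3 → ℤ) :
    x ∈ trGamma R H ↔ (((x 0, x 1) ∈ R ∨ (x 0, x 1) ∈ H) ∧ x 2 = 0) ∨
      ((x 0, x 1) ∈ H ∧ Even (x 0 + x 1) ∧ (x 2 = 1 ∨ x 2 = 2)) ∨
      ((x 0, x 1) ∈ H ∧ Odd (x 0 + x 1) ∧ (x 2 = -1 ∨ x 2 = -2)) := by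
  simp only [trGamma, Set.mem_union, Set.mem_ofPred_eq, vec_eq_iff, Prod.exists]
  constructor
  · rintro ((⟨a, b, h, rfl, rfl, h2⟩ | ⟨a, b, h, he, ⟨rfl, rfl, h2⟩ | ⟨rfl, rfl, h2⟩⟩) |
      ⟨a, b, h, he, ⟨rfl, rfl, h2⟩ | ⟨rfl, rfl, h2⟩⟩) <;> tauto
  · rintro (⟨h, h2⟩ | ⟨h, he, h2⟩ | ⟨h, he, h2⟩)
    · exact Or.inl (Or.inl ⟨_, _, h, rfl, rfl, h2⟩)
    · exact Or.inl (Or.inr ⟨_, _, h, he, by tauto⟩)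
    · exact Or.inr ⟨_, _, h, he, by tauto⟩

theorem mem_trIota_image (b : Set (ℤ × ℤ)) (x : Fin 3 → ℤ) :
    x ∈ trIota '' b ↔ (x 0, x 1) ∈ b ∧ x 2 = 0 := by
  constructor
  · rintro ⟨p, hp, rfl⟩
    exact ⟨hp, rfl⟩
  · rintro ⟨h, h2⟩
    exact ⟨_, h, ((vec_eq_iff _ _ _ _).2 ⟨rfl, rfl, h2⟩).symm⟩

theorem trIota_mem_tower (p : ℤ × ℤ) : trIota p ∈ trTower p := by
  rcases Int.even_or_odd (p.1 + p.2) with h | h <;> simp [trIota, trTower, h]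

theorem tower_sub (R H : Set (ℤ × ℤ)) (p : ℤ × ℤ) (hp : p ∈ H) : trTower p ⊆ trGamma R H := by
  rintro x ⟨h0, h1, h⟩
  obtain ⟨a, b⟩ := p
  simp only at h0 h1 h
  subst h0 h1
  rw [mem_trGamma]
  tauto

theorem tower_top (p : ℤ × ℤ) : ∃ x ∈ trTower p, x 2 ≠ 0 ∧ (x 2 = 2 ∨ x 2 = -2) := by
  rcases Int.even_or_odd (p.1 + p.2) with h | h
  · exact ⟨![p.1, p.2, 2], by simp [trTower, h], by simp⟩
  · exact ⟨![p.1, p.2, -2], by simp [trTower, h], by simp⟩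

theorem tower_ne_image (p : ℤ × ℤ) (b : Set (ℤ × ℤ)) : trTower p ≠ trIota '' b := by
  intro h
  obtain ⟨x, hx, h2, -⟩ := tower_top p
  rw [h, mem_trIota_image] at hx
  exact h2 hx.2

theorem vec_ext_iff (x y : Fin 3 → ℤ) : x = y ↔ x 0 = y 0 ∧ x 1 = y 1 ∧ x 2 = y 2 := by
  constructor
  · rintro rfl; simp
  · rintro ⟨h0, h1, h2⟩; ext i; fin_cases i <;> assumption

theorem mem_line_zero (c x : Fin 3 → ℤ) :
    x ∈ ({c, c + Pi.single 0 1, c + Pi.single 0 1 + Pi.single 0 1} : Set (Fin 3 → ℤ)) ↔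
      (x 0 = c 0 ∨ x 0 = c 0 + 1 ∨ x 0 = c 0 + 2) ∧ x 1 = c 1 ∧ x 2 = c 2 := by
  simp only [Set.mem_insert_iff, Set.mem_singleton_iff, vec_ext_iff, Pi.add_apply]
  simp
  omega

theorem mem_line_one (c x : Fin 3 → ℤ) :
    x ∈ ({c, c + Pi.single 1 1, c + Pi.single 1 1 + Pi.single 1 1} : Set (Fin 3 → ℤ)) ↔
      (x 1 = c 1 ∨ x 1 = c 1 + 1 ∨ x 1 = c 1 + 2) ∧ x 0 = c 0 ∧ x 2 = c 2 := by
  simp only [Set.mem_insert_iff, Set.mem_singleton_iff, vec_ext_iff, Pi.add_apply]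
  simp
  omega

theorem mem_line_two (c x : Fin 3 → ℤ) :
    x ∈ ({c, c + Pi.single 2 1, c + Pi.single 2 1 + Pi.single 2 1} : Set (Fin 3 → ℤ)) ↔
      (x 2 = c 2 ∨ x 2 = c 2 + 1 ∨ x 2 = c 2 + 2) ∧ x 0 = c 0 ∧ x 1 = c 1 := by
  simp only [Set.mem_insert_iff, Set.mem_singleton_iff, vec_ext_iff, Pi.add_apply]
  simp
  omega

theorem mem_tower (p : ℤ × ℤ) (x : Fin 3 → ℤ) :
    x ∈ trTower p ↔ x 0 = p.1 ∧ x 1 = p.2 ∧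
      (((p.1 + p.2) % 2 = 0 ∧ (x 2 = 0 ∨ x 2 = 1 ∨ x 2 = 2)) ∨
      ((p.1 + p.2) % 2 = 1 ∧ (x 2 = 0 ∨ x 2 = -1 ∨ x 2 = -2))) := by
  rw [← Int.even_iff, ← Int.odd_iff]
  rfl

theorem tower_isTromino (p : ℤ × ℤ) : IsTromino (trTower p) := by
  rcases Int.even_or_odd (p.1 + p.2) with h | h
  · refine ⟨![p.1, p.2, 0], 2, ?_⟩
    rw [Int.even_iff] at h
    ext x
    rw [mem_line_two, mem_tower]
    simp
    omega
  · refine ⟨![p.1, p.2, -2], 2, ?_⟩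
    rw [Int.odd_iff] at h
    ext x
    rw [mem_line_two, mem_tower]
    simp
    omega

theorem mem_bar_zero (a b : ℤ) (q : ℤ × ℤ) :
    q ∈ ({(a, b), (a, b) + (1, 0), (a, b) + (1, 0) + (1, 0)} : Set (ℤ × ℤ)) ↔
      (q.1 = a ∨ q.1 = a + 1 ∨ q.1 = a + 2) ∧ q.2 = b := by
  simp [Prod.ext_iff]
  omega

theorem mem_bar_one (a b : ℤ) (q : ℤ × ℤ) :
    q ∈ ({(a, b), (a, b) + (0, 1), (a, b) + (0, 1) + (0, 1)} : Set (ℤ × ℤ)) ↔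
      (q.2 = b ∨ q.2 = b + 1 ∨ q.2 = b + 2) ∧ q.1 = a := by
  simp [Prod.ext_iff]
  omega

theorem line_zero_eq (c : Fin 3 → ℤ) (hz : c 2 = 0) :
    ({c, c + Pi.single 0 1, c + Pi.single 0 1 + Pi.single 0 1} : Set (Fin 3 → ℤ)) =
      trIota '' {(c 0, c 1), (c 0, c 1) + (1, 0), (c 0, c 1) + (1, 0) + (1, 0)} := by
  ext x
  rw [mem_trIota_image, mem_line_zero, mem_bar_zero]
  simp only
  omega

theorem line_one_eq (c : Fin 3 → ℤ) (hz : c 2 = 0) :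
    ({c, c + Pi.single 1 1, c + Pi.single 1 1 + Pi.single 1 1} : Set (Fin 3 → ℤ)) =
      trIota '' {(c 0, c 1), (c 0, c 1) + (0, 1), (c 0, c 1) + (0, 1) + (0, 1)} := by
  ext x
  rw [mem_trIota_image, mem_line_one, mem_bar_one]
  simp only
  omega

theorem image_isTromino (b : Set (ℤ × ℤ)) (hb : IsBar b) : IsTromino (trIota '' b) := by
  obtain ⟨p, u, rfl | rfl, rfl⟩ := hb
  · exact ⟨trIota p, 0, (line_zero_eq (trIota p) rfl).symm⟩
  · exact ⟨trIota p, 1, (line_one_eq (trIota p) rfl).symm⟩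

theorem gamma_weak (R H : Set (ℤ × ℤ)) (x : Fin 3 → ℤ) (hx : x ∈ trGamma R H) :
    x 2 = 0 ∨ ((x 0, x 1) ∈ H ∧ ((x 0 + x 1) % 2 = 0 ∧ (x 2 = 1 ∨ x 2 = 2) ∨
      (x 0 + x 1) % 2 = 1 ∧ (x 2 = -1 ∨ x 2 = -2))) := by
  rw [mem_trGamma, Int.even_iff, Int.odd_iff] at hx
  tauto

theorem tromino_cases (R H : Set (ℤ × ℤ)) (s : Set (Fin 3 → ℤ))
    (hs : IsTromino s) (hsub : s ⊆ trGamma R H) :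
    (∃ p ∈ H, s = trTower p) ∨ ∃ b, IsBar b ∧ s = trIota '' b ∧ b ⊆ R ∪ H := by
  have key : ∀ b, s = trIota '' b → b ⊆ R ∪ H := by
    intro b hb p hp
    have := hsub (hb ▸ Set.mem_image_of_mem trIota hp)
    rw [mem_trGamma] at this
    simpa [trIota] using this
  obtain ⟨c, i, rfl⟩ := hs
  have m0 := gamma_weak _ _ _ (hsub (show c ∈ _ by simp))
  have m1 := gamma_weak _ _ _ (hsub (show c + Pi.single i 1 ∈ _ by simp))
  have m2 := gamma_weak _ _ _ (hsub (show c + Pi.single i 1 + Pi.single i 1 ∈ _ by simp))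
  have hi : i = 0 ∨ i = 1 ∨ i = 2 := by omega
  rcases hi with rfl | rfl | rfl
  · right
    have hz : c 2 = 0 := by
      simp at m0 m1
      omega
    exact ⟨_, ⟨_, _, Or.inl rfl, rfl⟩, line_zero_eq c hz, key _ (line_zero_eq c hz)⟩
  · right
    have hz : c 2 = 0 := by
      simp at m0 m1
      omega
    exact ⟨_, ⟨_, _, Or.inr rfl, rfl⟩, line_one_eq c hz, key _ (line_one_eq c hz)⟩
  · left
    simp at m0 m1 m2
    have hH : (c 0, c 1) ∈ H := by
      by_contra hn
      simp only [hn, false_and, or_false] at m0 m1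
      omega
    refine ⟨_, hH, ?_⟩
    simp only [hH, true_and] at m0 m1 m2
    ext x
    rw [mem_line_two, mem_tower]
    simp only
    omega

theorem tower_mem (R H : Set (ℤ × ℤ)) (T : Set (Set (Fin 3 → ℤ)))
    (hT : IsTiling IsTromino (trGamma R H) T) (p : ℤ × ℤ) (hp : p ∈ H) : trTower p ∈ T := by
  obtain ⟨h1, h2, h3⟩ := hT
  obtain ⟨x, hx, hx2, -⟩ := tower_top p
  have hxG := tower_sub R H p hp hx
  rw [← h3] at hxG
  obtain ⟨s, hs, hxs⟩ := hxG
  rcases tromino_cases R H s (h1 s hs).1 (h3 ▸ Set.subset_sUnion_of_mem hs) with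
    ⟨q, hq, rfl⟩ | ⟨b, hb, rfl, -⟩
  · have : q = p := Prod.ext (hxs.1.symm.trans hx.1) (hxs.2.1.symm.trans hx.2.1)
    exact this ▸ hs
  · exact absurd ((mem_trIota_image _ _).1 hxs).2 hx2

theorem tile_cases (R H : Set (ℤ × ℤ)) (T : Set (Set (Fin 3 → ℤ)))
    (hT : IsTiling IsTromino (trGamma R H) T) (s : Set (Fin 3 → ℤ)) (hs : s ∈ T) :
    (∃ p ∈ H, s = trTower p) ∨ ∃ b, IsBar b ∧ s = trIota '' b ∧ b ⊆ R := by
  have hT' := hT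
  obtain ⟨h1, h2, h3⟩ := hT
  rcases tromino_cases R H s (h1 s hs).1 (h3 ▸ Set.subset_sUnion_of_mem hs) with
    h | ⟨b, hb, rfl, hsub⟩
  · exact Or.inl h
  · refine Or.inr ⟨b, hb, rfl, fun q hq => ?_⟩
    rcases hsub hq with h | h
    · exact h
    · exfalso
      have ht := tower_mem R H T hT' q h
      refine tower_ne_image q b (h2.elim ht hs ?_)
      exact Set.not_disjoint_iff.2 ⟨trIota q, trIota_mem_tower q, Set.mem_image_of_mem _ hq⟩

theorem fwd_tiling (R H : Set (ℤ × ℤ)) (hdisj : Disjoint R H) (T : Set (Set (Fin 3 → ℤ)))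
    (hT : IsTiling IsTromino (trGamma R H) T) : IsTiling IsBar R {b | trIota '' b ∈ T} := by
  have hc : ∀ b, trIota '' b ∈ T → IsBar b ∧ b ⊆ R := by
    intro b hb
    rcases tile_cases R H T hT _ hb with ⟨p, -, h⟩ | ⟨b', h, he, hs⟩
    · exact absurd h.symm (tower_ne_image p b)
    · rw [trIota_inj.image_injective he]
      exact ⟨h, hs⟩
  refine ⟨fun b hb => ⟨(hc b hb).1, Set.image_nonempty.1 (hT.1 _ hb).2⟩, ?_, ?_⟩
  · intro b hb b' hb' hne
    have := hT.2.1 hb hb' (fun h => hne (trIota_inj.image_injective h))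
    exact (Set.disjoint_image_iff trIota_inj).1 this
  · ext p
    constructor
    · rintro ⟨b, hb, hp⟩
      exact (hc b hb).2 hp
    · intro hp
      have hG : trIota p ∈ trGamma R H := Or.inl (Or.inl ⟨p, Or.inl hp, rfl⟩)
      rw [← hT.2.2] at hG
      obtain ⟨s, hs, hps⟩ := hG
      rcases tile_cases R H T hT s hs with ⟨q, hq, rfl⟩ | ⟨b, hb, rfl, -⟩
      · have : p = q := Prod.ext hps.1 hps.2.1
        exact absurd (this ▸ hq) (Set.disjoint_left.1 hdisj hp)
      · exact ⟨b, hs, (trIota_inj.mem_set_image).1 hps⟩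

theorem bwd_tiling (R H : Set (ℤ × ℤ)) (hdisj : Disjoint R H) (B : Set (Set (ℤ × ℤ)))
    (hB : IsTiling IsBar R B) : IsTiling IsTromino (trGamma R H)
      {s | (∃ b ∈ B, s = trIota '' b) ∨ ∃ p ∈ H, s = trTower p} := by
  have hbR : ∀ b ∈ B, b ⊆ R := fun b hb => hB.2.2 ▸ Set.subset_sUnion_of_mem hb
  have hbt : ∀ b ∈ B, ∀ p ∈ H, Disjoint (trIota '' b) (trTower p) := by
    intro b hb p hp
    rw [Set.disjoint_left]
    rintro _ ⟨q, hq, rfl⟩ h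
    have : q = p := Prod.ext h.1 h.2.1
    exact Set.disjoint_left.1 hdisj (hbR b hb hq) (this ▸ hp)
  refine ⟨?_, ?_, ?_⟩
  · rintro s (⟨b, hb, rfl⟩ | ⟨p, hp, rfl⟩)
    · exact ⟨image_isTromino b (hB.1 b hb).1, (hB.1 b hb).2.image _⟩
    · exact ⟨tower_isTromino p, _, trIota_mem_tower p⟩
  · rintro s (⟨b, hb, rfl⟩ | ⟨p, hp, rfl⟩) s' (⟨b', hb', rfl⟩ | ⟨p', hp', rfl⟩) hne
    · exact (Set.disjoint_image_iff trIota_inj).2 (hB.2.1 hb hb' (fun h => hne (h ▸ rfl)))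
    · exact hbt b hb p' hp'
    · exact (hbt b' hb' p hp).symm
    · refine Set.disjoint_left.2 fun x hx hx' => hne ?_
      have : p = p' := Prod.ext (hx.1.symm.trans hx'.1) (hx.2.1.symm.trans hx'.2.1)
      rw [this]
  · ext x
    constructor
    · rintro ⟨s, ⟨b, hb, rfl⟩ | ⟨p, hp, rfl⟩, hx⟩
      · obtain ⟨q, hq, rfl⟩ := hx
        exact Or.inl (Or.inl ⟨q, Or.inl (hbR b hb hq), rfl⟩)
      · exact tower_sub R H p hp hx
    · intro hx
      rw [mem_trGamma] at hx
      by_cases hH : (x 0, x 1) ∈ H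
      · refine ⟨trTower (x 0, x 1), Or.inr ⟨_, hH, rfl⟩, rfl, rfl, ?_⟩
        have := Int.even_or_odd (x 0 + x 1)
        simp only
        tauto
      · have hR : (x 0, x 1) ∈ R ∧ x 2 = 0 := by tauto
        have h := hR.1
        rw [← hB.2.2] at h
        obtain ⟨b, hb, hm⟩ := h
        exact ⟨_, Or.inl ⟨b, hb, rfl⟩, (mem_trIota_image _ _).2 ⟨hm, hR.2⟩⟩

def trEquiv (R H : Set (ℤ × ℤ)) (hdisj : Disjoint R H) :
    {T // IsTiling IsTromino (trGamma R H) T} ≃ {T // IsTiling IsBar R T} where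
  toFun T := ⟨_, fwd_tiling R H hdisj T.1 T.2⟩
  invFun B := ⟨_, bwd_tiling R H hdisj B.1 B.2⟩
  left_inv := by
    rintro ⟨T, hT⟩
    apply Subtype.ext
    ext s
    constructor
    · rintro (⟨b, hb, rfl⟩ | ⟨p, hp, rfl⟩)
      · exact hb
      · exact tower_mem R H T hT p hp
    · intro hs
      rcases tile_cases R H T hT s hs with h | ⟨b, -, rfl, -⟩
      · exact Or.inr h
      · exact Or.inl ⟨b, hs, rfl⟩
  right_inv := by
    rintro ⟨B, hB⟩
    apply Subtype.ext
    ext b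
    constructor
    · rintro (⟨b', hb, h⟩ | ⟨p, hp, h⟩)
      · rw [trIota_inj.image_injective h]
        exact hb
      · exact absurd h.symm (tower_ne_image p b)
    · intro hb
      exact Or.inl ⟨b, hb, rfl⟩

/-- The augmented region: `R ∪ H` on the `z = 0` plane, with vertical tromino towers
above (for even `x+y`) or below (for odd `x+y`) each hole cell of `H`.  It is
tromino-tileable iff `R` is bar-tileable, and the tilings are in bijection. -/
theorem tromino_augmentation
    (R H : Set (ℤ × ℤ)) (hR : R.Finite) (hH : H.Finite) (hdisj : Disjoint R H) :
    let Γ : Set (Fin 3 → ℤ) :=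
      {x | ∃ p ∈ R ∪ H, x = ![p.1, p.2, 0]} ∪
      {x | ∃ p ∈ H, Even (p.1 + p.2) ∧ (x = ![p.1, p.2, 1] ∨ x = ![p.1, p.2, 2])} ∪
      {x | ∃ p ∈ H, Odd (p.1 + p.2) ∧ (x = ![p.1, p.2, -1] ∨ x = ![p.1, p.2, -2])}
    ((∃ T, IsTiling IsTromino Γ T) ↔ ∃ T, IsTiling IsBar R T) ∧
    Nonempty ({T // IsTiling IsTromino Γ T} ≃ {T // IsTiling IsBar R T}) := by
  intro Γ
  have e := trEquiv R H hdisj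
  refine ⟨⟨?_, ?_⟩, ⟨e⟩⟩
  · rintro ⟨T, hT⟩
    exact ⟨_, (e ⟨T, hT⟩).2⟩
  · rintro ⟨T, hT⟩
    exact ⟨_, (e.symm ⟨T, hT⟩).2⟩
end

section
/- Let A = ⋃_{v ∈ S} (v + [0,1]³) ⊂ ℝ³, where S = {0,1}³ ∖ {(0,0,0),(1,1,1)} (the union of six closed unit cubes obtained from the 2×2×2 cube [0,2]³ by removing two diagonally opposite unit cubes). Then A is contractible, but the interior of A is not simply connected; in particular the interior of A is not contractible, so A is not a contractible region. -/
/-- The set of six integer vectors indexing the cubes. -/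
def sixS : Set (Fin 3 → ℤ) :=
  {v | (∀ i, v i = 0 ∨ v i = 1) ∧ v ≠ (fun _ => 0) ∧ v ≠ (fun _ => 1)}

lemma mem_sixA (x : Fin 3 → ℝ) : x ∈ cubeClosure sixS ↔
    (∀ i, 0 ≤ x i ∧ x i ≤ 2) ∧ (∃ i, x i ≤ 1) ∧ (∃ j, 1 ≤ x j) := by
  simp only [cubeClosure, sixS, Set.mem_iUnion, Set.mem_ofPred_eq, exists_prop]
  constructor
  · rintro ⟨v, ⟨hv, h0, h1⟩, hx⟩
    refine ⟨fun i => ?_, ?_, ?_⟩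
    · have := hx i
      rcases hv i with h | h <;> rw [h] at this <;> push_cast at this <;>
        constructor <;> linarith
    · obtain ⟨i, hi⟩ := Function.ne_iff.1 h1
      have h : v i = 0 := (hv i).resolve_right hi
      have := hx i
      rw [h] at this
      push_cast at this
      exact ⟨i, by linarith⟩
    · obtain ⟨i, hi⟩ := Function.ne_iff.1 h0
      have h : v i = 1 := (hv i).resolve_left hi
      have := hx i
      rw [h] at this
      push_cast at this
      exact ⟨i, by linarith⟩
  · rintro ⟨hb, hi, hj⟩
    obtain ⟨i, j, hij, hi, hj⟩ : ∃ i j, i ≠ j ∧ x i ≤ 1 ∧ 1 ≤ x j := by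
      obtain ⟨i, hi⟩ := hi
      obtain ⟨j, hj⟩ := hj
      by_cases hij : i = j
      · subst hij
        have hne : i ≠ i + 1 := by fin_cases i <;> decide
        rcases le_total (x (i + 1)) 1 with h | h
        · exact ⟨i + 1, i, hne.symm, h, hj⟩
        · exact ⟨i, i + 1, hne, hi, h⟩
      · exact ⟨i, j, hij, hi, hj⟩
    refine ⟨fun a => if a = i then 0 else if a = j then 1 else if x a ≤ 1 then 0 else 1,
      ⟨fun a => ?_, ?_, ?_⟩, fun a => ?_⟩
    · dsimp only
      split_ifs <;> simp
    · intro h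
      have := congrFun h j
      simp [hij.symm] at this
    · intro h
      have := congrFun h i
      simp at this
    · have := hb a
      dsimp only
      split_ifs with h1 h2 h3
      · subst h1; push_cast; constructor <;> linarith
      · subst h2; push_cast; constructor <;> linarith
      · push_cast; constructor <;> linarith
      · push_cast; constructor <;> linarith

lemma sixA_contractible : ContractibleSpace ↥(cubeClosure sixS) := by
  have hs : StarConvex ℝ (fun _ => 1 : Fin 3 → ℝ) (cubeClosure sixS) := by
    intro x hx a b ha hb hab
    rw [mem_sixA] at hx ⊢
    obtain ⟨h, ⟨i, hi⟩, ⟨j, hj⟩⟩ := hx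
    simp only [Pi.add_apply, Pi.smul_apply, smul_eq_mul, mul_one]
    refine ⟨fun k => ?_, ⟨i, by nlinarith⟩, ⟨j, by nlinarith⟩⟩
    obtain ⟨h1, h2⟩ := h k
    constructor <;> nlinarith
  exact hs.contractibleSpace ⟨_, (mem_sixA (fun _ => 1)).2
    ⟨fun _ => by norm_num, ⟨0, le_refl _⟩, ⟨0, le_refl _⟩⟩⟩

/-- The interior contains no point of the diagonal. -/
lemma diag_notMem (c : ℝ) : (fun _ => c : Fin 3 → ℝ) ∉ interior (cubeClosure sixS) := by
  intro h
  have hf : Continuous (fun t : ℝ => (fun _ => t : Fin 3 → ℝ)) := by fun_prop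
  have ho : IsOpen ((fun t : ℝ => (fun _ => t : Fin 3 → ℝ)) ⁻¹' interior (cubeClosure sixS)) :=
    isOpen_interior.preimage hf
  obtain ⟨e, he, hball⟩ := Metric.isOpen_iff.1 ho c h
  have key : ∀ t : ℝ, dist t c < e → t = 1 := fun t ht => by
    have h1 := (mem_sixA _).1 (interior_subset (hball ht))
    obtain ⟨-, ⟨i, hi⟩, ⟨j, hj⟩⟩ := h1
    exact le_antisymm hi hj
  have h1 := key c (by simpa using he)
  have h2 := key (c + e / 2) (by
    rw [Real.dist_eq, add_sub_cancel_left, abs_of_pos (by linarith)]; linarith)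
  linarith

lemma mem_interior_sixA (x : Fin 3 → ℝ) (hb : ∀ i, 0 < x i ∧ x i < 2)
    (i j : Fin 3) (hi : x i < 1) (hj : 1 < x j) : x ∈ interior (cubeClosure sixS) := by
  have ho : IsOpen ({y : Fin 3 → ℝ | (∀ k, 0 < y k ∧ y k < 2) ∧ y i < 1 ∧ 1 < y j}) := by
    have h1 : ∀ k : Fin 3, Continuous (fun y : Fin 3 → ℝ => y k) := fun k => continuous_apply k
    have h2 : IsOpen (⋂ k, ({y : Fin 3 → ℝ | 0 < y k} ∩ {y : Fin 3 → ℝ | y k < 2})) :=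
      isOpen_iInter_of_finite fun k =>
        (isOpen_lt continuous_const (h1 k)).inter (isOpen_lt (h1 k) continuous_const)
    have h3 : IsOpen ({y : Fin 3 → ℝ | y i < 1} ∩ {y : Fin 3 → ℝ | 1 < y j}) :=
      (isOpen_lt (h1 i) continuous_const).inter (isOpen_lt continuous_const (h1 j))
    convert h2.inter h3 using 1
    ext y
    simp
  refine interior_maximal ?_ ho ⟨hb, hi, hj⟩
  rintro y ⟨h, h1, h2⟩
  exact (mem_sixA y).2 ⟨fun k => ⟨(h k).1.le, (h k).2.le⟩, ⟨i, h1.le⟩, ⟨j, h2.le⟩⟩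

/-- A loop around the diagonal. -/
noncomputable def sixLoop (t : ℝ) : Fin 3 → ℝ :=
  ![1 + Real.cos t / 2, 1 + (Real.sin t - Real.cos t) / 4, 1 + (-Real.sin t - Real.cos t) / 4]

lemma sixLoop_mem (t : ℝ) : sixLoop t ∈ interior (cubeClosure sixS) := by
  have c1 := Real.cos_le_one t
  have c2 := Real.neg_one_le_cos t
  have s1 := Real.sin_le_one t
  have s2 := Real.neg_one_le_sin t
  have hcs := Real.sin_sq_add_cos_sq t
  have hb : ∀ i, 0 < sixLoop t i ∧ sixLoop t i < 2 := by
    intro i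
    fin_cases i <;> simp [sixLoop] <;> constructor <;> linarith
  have e0 : sixLoop t 0 = 1 + Real.cos t / 2 := rfl
  have e1 : sixLoop t 1 = 1 + (Real.sin t - Real.cos t) / 4 := rfl
  have e2 : sixLoop t 2 = 1 + (-Real.sin t - Real.cos t) / 4 := rfl
  have hi : ∃ i, sixLoop t i < 1 := by
    by_contra! h
    have h0 := h 0
    have h1 := h 1
    have h2 := h 2
    have hc : Real.cos t = 0 := by linarith
    have hs : Real.sin t = 0 := by linarith
    rw [hc, hs] at hcs
    norm_num at hcs
  have hj : ∃ i, 1 < sixLoop t i := by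
    by_contra! h
    have h0 := h 0
    have h1 := h 1
    have h2 := h 2
    have hc : Real.cos t = 0 := by linarith
    have hs : Real.sin t = 0 := by linarith
    rw [hc, hs] at hcs
    norm_num at hcs
  obtain ⟨i, hi⟩ := hi
  obtain ⟨j, hj⟩ := hj
  exact mem_interior_sixA _ hb i j hi hj

lemma interior_not_simplyConnected :
    ¬ SimplyConnectedSpace ↥(interior (cubeClosure sixS)) := by
  intro hsc
  have : LocallyPathConnectedSpace ↥(interior (cubeClosure sixS)) :=
    isOpen_interior.locallyPathConnectedSpace
  have hy : ∀ k : Fin 3, Continuous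
      (fun y : ↥(interior (cubeClosure sixS)) => (y : Fin 3 → ℝ) k) :=
    fun k => (continuous_apply k).comp continuous_subtype_val
  let f : C(↥(interior (cubeClosure sixS)), ℂ) :=
    ⟨fun y => ((2 * y.1 0 - y.1 1 - y.1 2 : ℝ) : ℂ) + ((3 * (y.1 1 - y.1 2) : ℝ) : ℂ) * Complex.I,
      (Complex.continuous_ofReal.comp
        (((continuous_const.mul (hy 0)).sub (hy 1)).sub (hy 2))).add
        ((Complex.continuous_ofReal.comp
          (continuous_const.mul ((hy 1).sub (hy 2)))).mul continuous_const)⟩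
  have hf : ∀ y, f y ≠ 0 := by
    intro y h
    have hre : 2 * y.1 0 - y.1 1 - y.1 2 = 0 := by
      simpa [f] using congrArg Complex.re h
    have him : 3 * (y.1 1 - y.1 2) = 0 := by
      have h2 := congrArg Complex.im h
      simp only [f, ContinuousMap.coe_mk, Complex.add_im, Complex.ofReal_im,
        Complex.im_ofReal_mul, Complex.I_im, Complex.zero_im] at h2
      linarith
    apply diag_notMem (y.1 0)
    convert y.2 using 1
    funext k
    fin_cases k
    · rfl
    · change y.1 0 = y.1 1
      linarith
    · change y.1 0 = y.1 2
      linarith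
  let γ : ℝ → ↥(interior (cubeClosure sixS)) := fun t => ⟨sixLoop t, sixLoop_mem t⟩
  have hγ : Continuous γ := by
    refine Continuous.subtype_mk ?_ _
    refine continuous_pi fun i => ?_
    fin_cases i <;> simp [sixLoop] <;> fun_prop
  have hfγ : ∀ t : ℝ, f (γ t) = 3 / 2 * Complex.exp (t * Complex.I) := by
    intro t
    have e0 : sixLoop t 0 = 1 + Real.cos t / 2 := rfl
    have e1 : sixLoop t 1 = 1 + (Real.sin t - Real.cos t) / 4 := rfl
    have e2 : sixLoop t 2 = 1 + (-Real.sin t - Real.cos t) / 4 := rfl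
    simp only [f, γ, ContinuousMap.coe_mk, e0, e1, e2, Complex.exp_mul_I]
    push_cast
    ring
  obtain ⟨L, ⟨-, hL⟩, -⟩ := Complex.isCoveringMapOn_exp.existsUnique_continuousMap_lifts f
    (a₀ := γ 0) (e₀ := Complex.log (f (γ 0))) (Complex.exp_log (hf _)) (fun a => hf a)
  have hexp : ∀ t : ℝ, Complex.exp (L (γ t) - t * Complex.I) = 3 / 2 := by
    intro t
    have h := congrFun hL (γ t)
    simp only [Function.comp_apply] at h
    rw [Complex.exp_sub, h, hfγ, mul_div_assoc, div_self (Complex.exp_ne_zero _), mul_one]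
  have hconst := Complex.isCoveringMap_exp.const_of_comp
    (g := fun t : ℝ => L (γ t) - t * Complex.I) (by fun_prop)
    (fun a a' => Subtype.ext (by simp only [hexp])) 0 (2 * Real.pi)
  have hper : γ (2 * Real.pi) = γ 0 := by
    apply Subtype.ext
    simp [γ, sixLoop]
  rw [hper] at hconst
  have := congrArg Complex.im hconst
  simp at this
  linarith [Real.pi_pos]

/-- The union `A` of the six closed unit cubes obtained from the `2 × 2 × 2` cube by
removing two diagonally opposite unit cubes is contractible, but its interior is not
simply connected; in particular its interior is not contractible, so the underlying
set of six cubes is not a contractible region. -/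
theorem six_cube_region_not_contractible :
    let S : Set (Fin 3 → ℤ) :=
      {v | (∀ i, v i = 0 ∨ v i = 1) ∧ v ≠ (fun _ => 0) ∧ v ≠ (fun _ => 1)}
    ContractibleSpace ↥(cubeClosure S) ∧
    ¬ SimplyConnectedSpace ↥(interior (cubeClosure S)) ∧
    ¬ ContractibleSpace ↥(interior (cubeClosure S)) ∧
    ¬ IsContractibleRegion S := by
  intro S
  have hS : S = sixS := rfl
  rw [hS]
  have h : ¬ ContractibleSpace ↥(interior (cubeClosure sixS)) := fun _ =>
    interior_not_simplyConnected inferInstance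
  exact ⟨sixA_contractible, interior_not_simplyConnected, h, fun hc => h hc.2.2⟩
end
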